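/- Let m ≥ 1 be an integer. The operator □^m is a bounded isomorphism from H²(T_{Λ₃}) onto the Bergman space A²_{2m}(T_{Λ₃}): there is a constant c_m > 0 such that for every F ∈ H²(T_{Λ₃}) one has □^m F ∈ A²_{2m}(T_{Λ₃}) with ‖□^m F‖²_{A²_{2m}} = c_m ‖F‖²_{H²}, and conversely every G ∈ A²_{2m}(T_{Λ₃}) equals a constant multiple of □^m F for some F ∈ H²(T_{Λ₃}). -/

import Mathlib

open MeasureTheory Set
open scoped ENNReal NNReal

noncomputable section

/-- The Lorentz cone `Λ₃ = {y ∈ ℝ³ : y₁ + y₂ > 0, y₁² − y₂² − y₃² > 0}`. -/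
def Lambda3 : Set (Fin 3 → ℝ) :=
  {y | 0 < y 0 + y 1 ∧ 0 < (y 0) ^ 2 - (y 1) ^ 2 - (y 2) ^ 2}

/-- The tube domain `T_{Λ₃} = ℝ³ + iΛ₃ ⊂ ℂ³`. -/
def TLambda3 : Set (Fin 3 → ℂ) :=
  {z | (fun i => (z i).im) ∈ Lambda3}

/-- The determinant function of the Lorentz cone: `Δ(y) = y₁² − y₂² − y₃²`. -/
def DeltaL (y : Fin 3 → ℝ) : ℝ := (y 0) ^ 2 - (y 1) ^ 2 - (y 2) ^ 2

/-- Square of the Hardy space `H²(T_{Λ₃})` norm. -/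
def hardyNormSq (F : (Fin 3 → ℂ) → ℂ) : ℝ≥0∞ :=
  ⨆ y ∈ Lambda3,
    ∫⁻ x : Fin 3 → ℝ, (‖F (fun i => (x i : ℂ) + (y i : ℂ) * Complex.I)‖₊ : ℝ≥0∞) ^ 2

/-- Square of the weighted Bergman space `A²_ν(T_{Λ₃})` norm:
`‖G‖² = ∫_{Λ₃} ∫_{ℝ³} |G(x+iy)|² Δ(y)^{ν−3/2} dx dy`. -/
def bergNormSqTube (ν : ℝ) (G : (Fin 3 → ℂ) → ℂ) : ℝ≥0∞ :=
  ∫⁻ y in Lambda3,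
    (∫⁻ x : Fin 3 → ℝ, (‖G (fun i => (x i : ℂ) + (y i : ℂ) * Complex.I)‖₊ : ℝ≥0∞) ^ 2)
      * ENNReal.ofReal (DeltaL y ^ (ν - 3 / 2))

/-- Partial derivative in the `i`-th complex coordinate. -/
def pd (i : Fin 3) (F : (Fin 3 → ℂ) → ℂ) : (Fin 3 → ℂ) → ℂ :=
  fun z => fderiv ℂ F z (Pi.single i 1)

/-- The box operator `□ = −∂²/∂z₁² + ∂²/∂z₂² + ∂²/∂z₃²` associated to the Lorentz cone. -/
def Box (F : (Fin 3 → ℂ) → ℂ) : (Fin 3 → ℂ) → ℂ :=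
  fun z => - pd 0 (pd 0 F) z + pd 1 (pd 1 F) z + pd 2 (pd 2 F) z

/-!
Every `F ∈ H²(T_{Λ₃})` and every `G ∈ A²_ν(T_{Λ₃})` is a Fourier–Laplace transform
`∫ g(ξ) e^{2πi⟨z,ξ⟩} dξ`: the slices over compact subsets of the cone are square integrable, so each
slice has an `L²` Fourier transform, and moving the plane of integration shows that, up to the
factor `e^{-2π⟨y,ξ⟩}`, it does not depend on the height `y`. Finiteness of the norm forces `g` to
vanish outside the dual cone, which is the closure of `Λ₃` itself. By Plancherel on every slice,

  `‖F‖²_{H²} = ∫ |g|²` and `‖G‖²_{A²_ν} = ∫ |g(ξ)|² K_ν(ξ) dξ`, where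
  `K_ν(ξ) = ∫_{Λ₃} e^{-4π⟨y,ξ⟩} Δ(y)^{ν-3/2} dy`.

Since linear automorphisms act transitively on the cone, `K_ν` is a multiple of `Δ^{-ν}`. On the
other side `□^m` multiplies `g` by `(4π²Δ)^m`, so that for `ν = 2m` the two weights cancel up to a
constant.
-/

open FourierTransform SchwartzMap Filter
open scoped Topology Real ContDiff

/-! ### The Fourier transform of square-integrable functions -/

theorem eLpNorm_two_sq_eq_lintegral {α E : Type*} [MeasurableSpace α] {μ : Measure α}
    [NormedAddCommGroup E] (f : α → E) : eLpNorm f 2 μ ^ 2 = ∫⁻ x, ‖f x‖ₑ ^ 2 ∂μ := by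
  simpa using eLpNorm_nnreal_pow_eq_lintegral (μ := μ) (f := f) (p := (2 : ℝ≥0)) two_ne_zero

theorem memLp_two_iff_lintegral_lt_top {α E : Type*} [MeasurableSpace α] {μ : Measure α}
    [NormedAddCommGroup E] {f : α → E} (hf : AEStronglyMeasurable f μ) :
    MemLp f 2 μ ↔ ∫⁻ x, ‖f x‖ₑ ^ 2 ∂μ < ⊤ := by
  rw [← eLpNorm_two_sq_eq_lintegral, ENNReal.pow_lt_top_iff, MemLp]
  simp [hf]

section InnerProductSpace

variable {V F : Type*} [NormedAddCommGroup V] [InnerProductSpace ℝ V] [FiniteDimensional ℝ V]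
  [MeasurableSpace V] [BorelSpace V] [NormedAddCommGroup F] [InnerProductSpace ℂ F] {f : V → F}

theorem continuous_fourierInv (hf : Integrable f) : Continuous (𝓕⁻ f) := by
  rw [show 𝓕⁻ f = fun x => 𝓕 f (-x) from funext (Real.fourierInv_eq_fourier_neg f)]
  exact (VectorFourier.fourierIntegral_continuous Real.continuous_fourierChar
    continuous_inner hf).comp continuous_neg

variable [CompleteSpace F]

theorem integral_smul_fourier_toLp (hf : MemLp f 2) (ψ : 𝓢(V, ℂ)) :
    ∫ x, ψ x • (𝓕 (hf.toLp f) : Lp F 2 (volume : Measure V)) x = ∫ x, 𝓕 (ψ : V → ℂ) x • f x := by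
  have h := congrArg (fun T => T ψ) (Lp.fourier_toTemperedDistribution_eq (hf.toLp f))
  simp only [TemperedDistribution.fourier_apply, Lp.toTemperedDistribution_apply] at h
  rw [← h, ← fourier_coe]
  exact integral_congr_ae (hf.coeFn_toLp.mono fun x hx => by simp only [hx])

theorem integral_smul_fourierInv_toLp (hf : MemLp f 2) (ψ : 𝓢(V, ℂ)) :
    ∫ x, ψ x • (𝓕⁻ (hf.toLp f) : Lp F 2 (volume : Measure V)) x
      = ∫ x, 𝓕⁻ (ψ : V → ℂ) x • f x := by
  have h := congrArg (fun T => T ψ) (Lp.fourierInv_toTemperedDistribution_eq (hf.toLp f))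
  simp only [TemperedDistribution.fourierInv_apply, Lp.toTemperedDistribution_apply] at h
  rw [← h, ← fourierInv_coe]
  exact integral_congr_ae (hf.coeFn_toLp.mono fun x hx => by simp only [hx])

theorem integral_fourierInv_smul_eq (hf : Integrable f) {ψ : V → ℂ} (hψ : Integrable ψ) :
    ∫ x, 𝓕⁻ ψ x • f x = ∫ x, ψ x • 𝓕⁻ f x := by
  have hflip : (-innerₗ V).flip = -innerₗ V := by
    ext x y
    simp [real_inner_comm]
  have h := VectorFourier.integral_fourierIntegral_smul_eq_flip (L := -innerₗ V) (μ := volume)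
    (ν := volume) Real.continuous_fourierChar
    (by simp only [LinearMap.neg_apply]; exact continuous_inner.neg) hψ hf
  rwa [hflip] at h

theorem fourierInv_toLp_ae_eq (hf : Integrable f) (hf₂ : MemLp f 2) :
    (𝓕⁻ (hf₂.toLp f) : Lp F 2 (volume : Measure V)) =ᵐ[volume] 𝓕⁻ f := by
  refine ae_eq_of_integral_contDiff_smul_eq ((Lp.memLp _).locallyIntegrable one_le_two)
    (continuous_fourierInv hf).locallyIntegrable fun g hg hgs => ?_
  have hψs : HasCompactSupport fun x => (g x : ℂ) := hgs.comp_left Complex.ofReal_zero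
  let ψ : 𝓢(V, ℂ) := hψs.toSchwartzMap (Complex.ofRealCLM.contDiff.comp hg)
  have hψ : ∀ x, ψ x = g x := fun _ => rfl
  simpa only [hψ, Complex.coe_smul] using (integral_smul_fourierInv_toLp hf₂ ψ).trans
    (integral_fourierInv_smul_eq hf ψ.integrable)

theorem eLpNorm_fourierInv (hf : Integrable f) (hf₂ : MemLp f 2) :
    eLpNorm (𝓕⁻ f) 2 volume = eLpNorm f 2 volume := by
  have h : ‖(𝓕⁻ (hf₂.toLp f) : Lp F 2 (volume : Measure V))‖ₑ = ‖hf₂.toLp f‖ₑ :=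
    (Lp.fourierTransformₗᵢ V F).symm.enorm_map _
  rwa [Lp.enorm_def, Lp.enorm_def, eLpNorm_congr_ae (fourierInv_toLp_ae_eq hf hf₂),
    eLpNorm_congr_ae hf₂.coeFn_toLp] at h

theorem ae_eq_fourierInv_of_integrable_fourier_toLp (hf : MemLp f 2)
    (hint : Integrable (𝓕 (hf.toLp f) : Lp F 2 (volume : Measure V))) :
    f =ᵐ[volume] 𝓕⁻ ((𝓕 (hf.toLp f) : Lp F 2 (volume : Measure V)) : V → F) := by
  have h := fourierInv_toLp_ae_eq hint (Lp.memLp _)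
  rw [Lp.toLp_coeFn, fourierInv_fourier_eq] at h
  exact hf.coeFn_toLp.symm.trans h

end InnerProductSpace

/-! ### Tube domains and the Fourier–Laplace transform -/

section TubeDomain

variable {ι : Type*}

/-- The point `x + iy` of `ℂ^ι`. -/
def tubePoint (x y : ι → ℝ) : ι → ℂ := fun i => x i + y i * Complex.I

/-- The tube domain `ℝ^ι + iΩ`. -/
def tube (Ω : Set (ι → ℝ)) : Set (ι → ℂ) := {z | (fun i => (z i).im) ∈ Ω}

theorem im_tubePoint (x y : ι → ℝ) : (fun i => (tubePoint x y i).im) = y := by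
  simp [tubePoint]

theorem tubePoint_re_im (z : ι → ℂ) :
    tubePoint (fun i => (z i).re) (fun i => (z i).im) = z := by
  ext i
  simp [tubePoint]

theorem tubePoint_mem_tube {Ω : Set (ι → ℝ)} {x y : ι → ℝ} : tubePoint x y ∈ tube Ω ↔ y ∈ Ω := by
  rw [tube, mem_ofPred_eq, im_tubePoint]

theorem tubePoint_add (x y u v : ι → ℝ) :
    tubePoint (x + u) (y + v) = tubePoint x y + tubePoint u v := by
  ext i
  simp only [tubePoint, Pi.add_apply]
  push_cast
  ring

theorem neg_tubePoint (x y : ι → ℝ) : -tubePoint x y = tubePoint (-x) (-y) := by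
  ext i
  simp only [tubePoint, Pi.neg_apply]
  push_cast
  ring

theorem continuous_tubePoint :
    Continuous fun p : (ι → ℝ) × (ι → ℝ) => tubePoint p.1 p.2 := by
  unfold tubePoint
  fun_prop

theorem isOpen_tube {Ω : Set (ι → ℝ)} (hΩ : IsOpen Ω) : IsOpen (tube Ω) :=
  hΩ.preimage (f := fun (z : ι → ℂ) i => (z i).im) (by fun_prop)

theorem continuous_comp_tubePoint {Ω : Set (ι → ℝ)} {G : (ι → ℂ) → ℂ} {y : ι → ℝ}
    (hG : ContinuousOn G (tube Ω)) (hy : y ∈ Ω) :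
    Continuous fun x => G (tubePoint x y) :=
  hG.comp_continuous
    (continuous_tubePoint.comp (by fun_prop : Continuous fun x : ι → ℝ => (x, y)))
    fun _ => tubePoint_mem_tube.2 hy

end TubeDomain

section FourierLaplace

variable {ι : Type*} [Fintype ι]

/-- The squared `L²` norm of the slice `x ↦ F (x + iy)`. -/
def sliceNormSq (F : (ι → ℂ) → ℂ) (y : ι → ℝ) : ℝ≥0∞ := ∫⁻ x, ‖F (tubePoint x y)‖ₑ ^ 2

/-- The density `e^{-2π⟨y,ξ⟩} g(ξ)`, whose inverse Fourier transform is the slice at height `y` of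
the Fourier–Laplace transform of `g`. -/
def expTilt (y : ι → ℝ) (g : (ι → ℝ) → ℂ) : (ι → ℝ) → ℂ :=
  fun ξ => Real.exp (-(2 * π * (y ⬝ᵥ ξ))) • g ξ

/-- The Fourier–Laplace transform `z ↦ ∫ g(ξ) e^{2πi⟨z,ξ⟩} dξ`. -/
def fourierLaplace (g : (ι → ℝ) → ℂ) (z : ι → ℂ) : ℂ :=
  ∫ ξ : ι → ℝ, Complex.exp (2 * π * Complex.I * (z ⬝ᵥ fun i => (ξ i : ℂ))) * g ξ

theorem continuous_dotProduct_right (y : ι → ℝ) : Continuous fun ξ => y ⬝ᵥ ξ :=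
  continuous_const.dotProduct continuous_id

theorem expTilt_zero (g : (ι → ℝ) → ℂ) : expTilt 0 g = g := by
  ext ξ
  simp [expTilt]

theorem expTilt_expTilt (y w : ι → ℝ) (g : (ι → ℝ) → ℂ) :
    expTilt y (expTilt w g) = expTilt (y + w) g := by
  ext ξ
  rw [expTilt, expTilt, expTilt, smul_smul, ← Real.exp_add, add_dotProduct]
  ring_nf

theorem aestronglyMeasurable_expTilt {g : (ι → ℝ) → ℂ} (hg : AEStronglyMeasurable g) (y : ι → ℝ) :
    AEStronglyMeasurable (expTilt y g) := by
  have := continuous_dotProduct_right y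
  have h : Continuous fun ξ => Real.exp (-(2 * π * (y ⬝ᵥ ξ))) := by fun_prop
  exact h.aestronglyMeasurable.smul hg

theorem contDiff_expTilt {g : (ι → ℝ) → ℂ} {n : ℕ∞} (hg : ContDiff ℝ n g) (y : ι → ℝ) :
    ContDiff ℝ n (expTilt y g) := by
  unfold expTilt dotProduct
  fun_prop

theorem hasCompactSupport_expTilt {g : (ι → ℝ) → ℂ} (hg : HasCompactSupport g) (y : ι → ℝ) :
    HasCompactSupport (expTilt y g) :=
  hg.smul_left (f := fun ξ => Real.exp (-(2 * π * (y ⬝ᵥ ξ))))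

theorem enorm_expTilt_sq (y : ι → ℝ) (g : (ι → ℝ) → ℂ) (ξ : ι → ℝ) :
    ‖expTilt y g ξ‖ₑ ^ 2 = ‖g ξ‖ₑ ^ 2 * ENNReal.ofReal (Real.exp (-(4 * π * (y ⬝ᵥ ξ)))) := by
  rw [expTilt, enorm_smul, mul_pow, mul_comm, Real.enorm_of_nonneg (Real.exp_nonneg _),
    ← ENNReal.ofReal_pow (Real.exp_nonneg _), ← Real.exp_nat_mul]
  ring_nf

theorem cexp_tubePoint_mul (x y ξ : ι → ℝ) (c : ℂ) :
    Complex.exp (2 * π * Complex.I * (tubePoint x y ⬝ᵥ fun i => (ξ i : ℂ))) * c =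
      Complex.exp (2 * π * Complex.I * ((x ⬝ᵥ ξ : ℝ) : ℂ)) *
        (Real.exp (-(2 * π * (y ⬝ᵥ ξ))) • c) := by
  have h : (tubePoint x y ⬝ᵥ fun i => (ξ i : ℂ)) =
      ((x ⬝ᵥ ξ : ℝ) : ℂ) + ((y ⬝ᵥ ξ : ℝ) : ℂ) * Complex.I := by
    simp only [dotProduct, tubePoint, add_mul, Finset.sum_add_distrib, Complex.ofReal_sum,
      Complex.ofReal_mul, Finset.sum_mul]
    congr 1
    exact Finset.sum_congr rfl fun i _ => by ring
  rw [h, Complex.real_smul, Complex.ofReal_exp, ← mul_assoc, ← Complex.exp_add]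
  congr 2
  push_cast
  linear_combination 2 * π * ((y ⬝ᵥ ξ : ℝ) : ℂ) * Complex.I_sq

theorem fourierLaplace_tubePoint (g : (ι → ℝ) → ℂ) (x y : ι → ℝ) :
    fourierLaplace g (tubePoint x y) =
      𝓕⁻ (fun v : EuclideanSpace ℝ ι => expTilt y g (WithLp.ofLp v)) (WithLp.toLp 2 x) := by
  rw [Real.fourierInv_eq', fourierLaplace, ← (PiLp.volume_preserving_ofLp ι).integral_comp
    (MeasurableEquiv.toLp 2 (ι → ℝ)).symm.measurableEmbedding]
  refine integral_congr_ae (ae_of_all _ fun v => ?_)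
  have h : inner ℝ v (WithLp.toLp 2 x) = x ⬝ᵥ WithLp.ofLp v := by
    simp [PiLp.inner_apply, dotProduct]
  dsimp only
  rw [h, cexp_tubePoint_mul, smul_eq_mul, expTilt]
  push_cast
  ring_nf

theorem fourierLaplace_expTilt (g : (ι → ℝ) → ℂ) (x y w : ι → ℝ) :
    fourierLaplace (expTilt w g) (tubePoint x y) = fourierLaplace g (tubePoint x (y + w)) := by
  rw [fourierLaplace_tubePoint, fourierLaplace_tubePoint, expTilt_expTilt]

theorem fourierLaplace_congr_ae {f g : (ι → ℝ) → ℂ} (h : f =ᵐ[volume] g) :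
    fourierLaplace f = fourierLaplace g := by
  ext z
  exact integral_congr_ae (h.mono fun ξ hξ => by simp only [hξ])

theorem continuous_fourierLaplace_slice {g : (ι → ℝ) → ℂ} {y : ι → ℝ}
    (hg : Integrable (expTilt y g)) : Continuous fun x => fourierLaplace g (tubePoint x y) := by
  simp only [fourierLaplace_tubePoint]
  exact (continuous_fourierInv
    ((PiLp.volume_preserving_ofLp ι).integrable_comp_of_integrable hg)).comp
      (PiLp.continuous_toLp 2 _)

theorem sliceNormSq_fourierLaplace {g : (ι → ℝ) → ℂ} {y : ι → ℝ} (hg : Integrable (expTilt y g))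
    (hg₂ : MemLp (expTilt y g) 2) :
    sliceNormSq (fourierLaplace g) y = ∫⁻ ξ, ‖expTilt y g ξ‖ₑ ^ 2 := by
  have mp := PiLp.volume_preserving_ofLp ι
  have h := eLpNorm_fourierInv (mp.integrable_comp_of_integrable hg)
    (hg₂.comp_measurePreserving mp)
  rw [eLpNorm_comp_measurePreserving hg₂.1 mp] at h
  rw [← eLpNorm_two_sq_eq_lintegral, ← h, eLpNorm_two_sq_eq_lintegral, sliceNormSq,
    ← (PiLp.volume_preserving_toLp ι).lintegral_comp_emb
      (MeasurableEquiv.toLp 2 (ι → ℝ)).measurableEmbedding]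
  simp only [fourierLaplace_tubePoint, Function.comp_def]

theorem exists_memLp_fourier {f : (ι → ℝ) → ℂ} (hf : MemLp f 2) :
    ∃ fhat : (ι → ℝ) → ℂ, MemLp fhat 2 ∧
      (∀ ψ : (ι → ℝ) → ℂ, ContDiff ℝ ∞ ψ → HasCompactSupport ψ →
        ∫ ξ, ψ ξ * fhat ξ = ∫ x, fourierLaplace ψ (tubePoint (-x) 0) * f x) ∧
      (Integrable fhat → f =ᵐ[volume] fun x => fourierLaplace fhat (tubePoint x 0)) := by
  have mp := PiLp.volume_preserving_ofLp ι
  have mp' := PiLp.volume_preserving_toLp ι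
  have me := (MeasurableEquiv.toLp 2 (ι → ℝ)).measurableEmbedding
  have hf' : MemLp (fun v : EuclideanSpace ℝ ι => f (WithLp.ofLp v)) 2 :=
    hf.comp_measurePreserving mp
  let Q : EuclideanSpace ℝ ι → ℂ :=
    ⇑(𝓕 (hf'.toLp _) : Lp ℂ 2 (volume : Measure (EuclideanSpace ℝ ι)))
  refine ⟨fun ξ => Q (WithLp.toLp 2 ξ), (Lp.memLp _).comp_measurePreserving mp', ?_, fun hint => ?_⟩
  · intro ψ hψ hψs
    let ψ' : 𝓢(EuclideanSpace ℝ ι, ℂ) :=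
      (hψs.comp_homeomorph (PiLp.homeomorph 2 fun _ : ι => ℝ)).toSchwartzMap
        (hψ.comp (PiLp.contDiff_ofLp))
    have h := integral_smul_fourier_toLp hf' ψ'
    rw [← mp'.integral_comp me, ← mp'.integral_comp me] at h
    refine h.trans (integral_congr_ae (ae_of_all _ fun x => ?_))
    simp only [fourierLaplace_tubePoint, expTilt_zero, Real.fourierInv_eq_fourier_neg,
      WithLp.toLp_neg, neg_neg, smul_eq_mul]
    rfl
  · have h := mp'.quasiMeasurePreserving.ae
      (ae_eq_fourierInv_of_integrable_fourier_toLp hf' (mp.integrable_comp_of_integrable hint))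
    filter_upwards [h] with x hx
    rw [fourierLaplace_tubePoint, expTilt_zero]
    exact hx

end FourierLaplace

/-! ### Moving the plane of integration -/

section ContourShift

variable {ι : Type*}

theorem tubePoint_add_smul (x y v : ι → ℝ) (w : ℂ) :
    tubePoint x y + w • (fun i => (v i : ℂ)) = tubePoint (x + w.re • v) (y + w.im • v) := by
  ext i
  simp only [tubePoint, Pi.add_apply, Pi.smul_apply, smul_eq_mul]
  nth_rw 1 [← Complex.re_add_im w]
  push_cast
  ring

theorem integral_boundary_square_tube [Finite ι] {Ω : Set (ι → ℝ)} {Φ : (ι → ℂ) → ℂ}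
    {y v : ι → ℝ} (hΦ : DifferentiableOn ℂ Φ (tube Ω))
    (hy : ∀ t ∈ Icc (0 : ℝ) 1, y + t • v ∈ Ω) (x : ι → ℝ) :
    (∫ τ in (0 : ℝ)..1, Φ (tubePoint (x + τ • v) (y + (0 : ℝ) • v))) -
      (∫ τ in (0 : ℝ)..1, Φ (tubePoint (x + τ • v) (y + (1 : ℝ) • v))) =
    Complex.I * ((∫ τ in (0 : ℝ)..1, Φ (tubePoint (x + (0 : ℝ) • v) (y + τ • v))) -
      ∫ τ in (0 : ℝ)..1, Φ (tubePoint (x + (1 : ℝ) • v) (y + τ • v))) := by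
  have := Fintype.ofFinite ι
  have h := Complex.integral_boundary_rect_eq_zero_of_differentiableOn
    (fun w : ℂ => Φ (tubePoint x y + w • (fun i => (v i : ℂ)))) 0 (1 + Complex.I) <| by
      refine hΦ.comp (by fun_prop) fun w hw => ?_
      rw [tubePoint_add_smul]
      exact tubePoint_mem_tube.2 (hy _ (by simpa using hw.2))
  simp only [tubePoint_add_smul] at h
  simp only [Complex.zero_im, Complex.ofReal_zero, zero_mul, add_zero, Complex.ofReal_re,
    Complex.ofReal_im, zero_smul, Complex.zero_re, Complex.add_re, Complex.one_re, Complex.I_re,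
    Complex.add_im, Complex.one_im, Complex.I_im, zero_add, Complex.ofReal_one, one_mul, one_smul,
    Complex.mul_re, mul_zero, mul_one, sub_self, Complex.mul_im, smul_eq_mul] at h
  simp only [zero_smul, add_zero, one_smul]
  linear_combination h

variable [Fintype ι] {Ω : Set (ι → ℝ)} {Φ : (ι → ℂ) → ℂ} {y v : ι → ℝ} {M : ℝ≥0∞}

theorem integrable_slice_prod_path (hΦ : ContinuousOn Φ (tube Ω)) (hM : M < ⊤)
    (hy : ∀ t ∈ Icc (0 : ℝ) 1, y + t • v ∈ Ω)
    (hb : ∀ t ∈ Icc (0 : ℝ) 1, ∫⁻ x, ‖Φ (tubePoint x (y + t • v))‖ₑ ≤ M)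
    {s t : ℝ → ℝ} (hs : Continuous s) (ht : Continuous t)
    (htI : ∀ τ ∈ Icc (0 : ℝ) 1, t τ ∈ Icc (0 : ℝ) 1) :
    Integrable (fun p : (ι → ℝ) × ℝ => Φ (tubePoint (p.1 + s p.2 • v) (y + t p.2 • v)))
      (volume.prod (volume.restrict (Ioc (0 : ℝ) 1))) := by
  have hmeas : AEStronglyMeasurable
      (fun p : (ι → ℝ) × ℝ => Φ (tubePoint (p.1 + s p.2 • v) (y + t p.2 • v)))
      (volume.prod (volume.restrict (Ioc (0 : ℝ) 1))) := by
    rw [← Measure.restrict_univ (μ := (volume : Measure (ι → ℝ))), Measure.prod_restrict]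
    refine (hΦ.comp (continuous_tubePoint.comp (by fun_prop : Continuous fun p : (ι → ℝ) × ℝ =>
      (p.1 + s p.2 • v, y + t p.2 • v))).continuousOn fun p hp => ?_).aestronglyMeasurable
        (MeasurableSet.univ.prod measurableSet_Ioc)
    exact tubePoint_mem_tube.2 (hy _ (htI _ (Ioc_subset_Icc_self hp.2)))
  refine ⟨hmeas, ?_⟩
  rw [HasFiniteIntegral, lintegral_prod_symm _ hmeas.enorm]
  calc ∫⁻ τ in Ioc (0 : ℝ) 1, ∫⁻ x, ‖Φ (tubePoint (x + s τ • v) (y + t τ • v))‖ₑ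
      ≤ ∫⁻ _ in Ioc (0 : ℝ) 1, M := setLIntegral_mono' measurableSet_Ioc fun τ hτ =>
        (lintegral_add_right_eq_self (fun x => ‖Φ (tubePoint x (y + t τ • v))‖ₑ) _).trans_le
          (hb _ (htI _ (Ioc_subset_Icc_self hτ)))
    _ < ⊤ := by simpa using hM

theorem integral_intervalIntegral_path {s t : ℝ → ℝ}
    (h : Integrable (fun p : (ι → ℝ) × ℝ => Φ (tubePoint (p.1 + s p.2 • v) (y + t p.2 • v)))
      (volume.prod (volume.restrict (Ioc (0 : ℝ) 1)))) :
    Integrable (fun x => ∫ τ in (0 : ℝ)..1, Φ (tubePoint (x + s τ • v) (y + t τ • v))) ∧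
      ∫ x, ∫ τ in (0 : ℝ)..1, Φ (tubePoint (x + s τ • v) (y + t τ • v)) =
        ∫ τ in (0 : ℝ)..1, ∫ x, Φ (tubePoint x (y + t τ • v)) := by
  simp only [intervalIntegral.integral_of_le zero_le_one]
  refine ⟨h.integral_prod_left, ?_⟩
  rw [integral_integral_swap h]
  exact integral_congr_ae <| ae_of_all _ fun τ =>
    integral_add_right_eq_self (fun x => Φ (tubePoint x (y + t τ • v))) (s τ • v)

/-- Cauchy's theorem on the squares `x + [0, 1]v + i(y + [0, 1]v)`, integrated over `x`: the two
vertical sides are translates of each other, so their integrals cancel. -/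
theorem integral_slice_eq_integral_slice_add (hΦ : DifferentiableOn ℂ Φ (tube Ω)) (hM : M < ⊤)
    (hy : ∀ t ∈ Icc (0 : ℝ) 1, y + t • v ∈ Ω)
    (hb : ∀ t ∈ Icc (0 : ℝ) 1, ∫⁻ x, ‖Φ (tubePoint x (y + t • v))‖ₑ ≤ M) :
    ∫ x, Φ (tubePoint x y) = ∫ x, Φ (tubePoint x (y + v)) := by
  have path {s t : ℝ → ℝ} (hs : Continuous s) (ht : Continuous t)
      (htI : ∀ τ ∈ Icc (0 : ℝ) 1, t τ ∈ Icc (0 : ℝ) 1) :=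
    integral_intervalIntegral_path (integrable_slice_prod_path hΦ.continuousOn hM hy hb hs ht htI)
  have bottom := path continuous_id' (continuous_const (y := 0)) (by simp)
  have top := path continuous_id' (continuous_const (y := 1)) (by simp)
  have left := path (continuous_const (y := 0)) continuous_id' (by simp)
  have right := path (continuous_const (y := 1)) continuous_id' (by simp)
  have h : ∫ x, _ = ∫ x, _ := integral_congr_ae <| ae_of_all volume fun x =>
    integral_boundary_square_tube hΦ hy x
  rw [integral_const_mul, integral_sub bottom.1 top.1, integral_sub left.1 right.1,
    bottom.2, top.2, left.2, right.2, sub_self, mul_zero, sub_eq_zero] at h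
  simpa using h

end ContourShift

/-! ### Local boundedness of slice norms -/

theorem mul_enorm_pow_le_lintegral_circleMap {f : ℂ → ℂ} {c : ℂ} {R : ℝ}
    (hf : DiffContOnCl ℂ f (Metric.ball c |R|)) (n : ℕ) :
    ENNReal.ofReal (2 * π) * ‖f c‖ₑ ^ n ≤
      ∫⁻ θ in Ioc 0 (2 * π), ‖f (circleMap c R θ)‖ₑ ^ n := by
  have hf' : DiffContOnCl ℂ (fun w => f w ^ n) (Metric.ball c |R|) :=
    (differentiable_pow n).comp_diffContOnCl hf
  have h : (∫ θ in Ioc 0 (2 * π), f (circleMap c R θ) ^ n) = (2 * π) • f c ^ n := by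
    rw [← hf'.circleAverage, Real.circleAverage_def, smul_inv_smul₀ Real.two_pi_pos.ne',
      intervalIntegral.integral_of_le Real.two_pi_pos.le]
  have h' := enorm_integral_le_lintegral_enorm (μ := volume.restrict (Ioc 0 (2 * π)))
    fun θ => f (circleMap c R θ) ^ n
  simpa only [h, enorm_smul, enorm_pow, Real.enorm_of_nonneg Real.two_pi_pos.le] using h'

section SubMeanValue

variable {ι : Type*} [Fintype ι]

theorem setLIntegral_ball_circle_smul (a : Circle) (f : (ι → ℂ) → ℝ≥0∞) (r : ℝ) :
    ∫⁻ w in Metric.ball 0 r, f ((a : ℂ) • w) = ∫⁻ w in Metric.ball 0 r, f w := by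
  have mp : MeasurePreserving fun w : ι → ℂ => (a : ℂ) • w :=
    volume_preserving_pi fun _ => (rotation a).measurePreserving
  have h : (fun w : ι → ℂ => (a : ℂ) • w) ⁻¹' Metric.ball 0 r = Metric.ball 0 r := by
    ext w
    rw [mem_preimage, mem_ball_zero_iff, mem_ball_zero_iff, norm_smul, Circle.norm_coe, one_mul]
  conv_lhs => rw [← h]
  exact mp.setLIntegral_comp_preimage_emb (Homeomorph.smul a).measurableEmbedding f _

theorem volume_preserving_tubePoint :
    MeasurePreserving fun p : (ι → ℝ) × (ι → ℝ) => tubePoint p.1 p.2 := by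
  have h := (volume_preserving_pi fun _ : ι =>
    Complex.volume_preserving_equiv_real_prod.symm).comp
      (volume_measurePreserving_arrowProdEquivProdArrow ℝ ℝ ι).symm
  convert h using 1
  ext p i
  simp [tubePoint, MeasurableEquiv.arrowProdEquivProdArrow, Equiv.arrowProdEquivProdArrow,
    Complex.measurableEquivRealProd, Complex.ext_iff]

/-- Averaging the one-variable mean value inequality over the discs `{z + t w : |t| ≤ 1}`, using
that the ball is invariant under the rotations `w ↦ e^{iθ} w`. -/
theorem volume_ball_mul_enorm_pow_le {G : (ι → ℂ) → ℂ} {z : ι → ℂ} {r : ℝ}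
    (hG : DifferentiableOn ℂ G (Metric.ball z r)) (n : ℕ) :
    volume (Metric.ball (0 : ι → ℂ) r) * ‖G z‖ₑ ^ n ≤
      ∫⁻ w in Metric.ball (0 : ι → ℂ) r, ‖G (z + w)‖ₑ ^ n := by
  have hdisc {w : ι → ℂ} (hw : w ∈ Metric.ball 0 r) {t : ℂ} (ht : ‖t‖ ≤ 1) :
      z + t • w ∈ Metric.ball z r := by
    rw [mem_ball_zero_iff] at hw
    rw [mem_ball_iff_norm, add_sub_cancel_left, norm_smul]
    nlinarith [norm_nonneg w, norm_nonneg t]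
  have hmean {w : ι → ℂ} (hw : w ∈ Metric.ball 0 r) :
      ENNReal.ofReal (2 * π) * ‖G z‖ₑ ^ n ≤
        ∫⁻ θ in Ioc 0 (2 * π), ‖G (z + circleMap 0 1 θ • w)‖ₑ ^ n := by
    have h : DifferentiableOn ℂ (fun t : ℂ => G (z + t • w)) (Metric.closedBall 0 |(1 : ℝ)|) :=
      hG.comp (by fun_prop) fun t ht => hdisc hw (by simpa using ht)
    simpa using mul_enorm_pow_le_lintegral_circleMap (h.diffContOnCl_ball subset_rfl) n
  have hrot (θ : ℝ) : ∫⁻ w in Metric.ball (0 : ι → ℂ) r, ‖G (z + circleMap 0 1 θ • w)‖ₑ ^ n =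
      ∫⁻ w in Metric.ball (0 : ι → ℂ) r, ‖G (z + w)‖ₑ ^ n := by
    simpa [circleMap] using
      setLIntegral_ball_circle_smul (Circle.exp θ) (fun w => ‖G (z + w)‖ₑ ^ n) r
  have hmeas : AEMeasurable (fun p : (ι → ℂ) × ℝ => ‖G (z + circleMap 0 1 p.2 • p.1)‖ₑ ^ n)
      ((volume.restrict (Metric.ball 0 r)).prod (volume.restrict (Ioc 0 (2 * π)))) := by
    rw [Measure.prod_restrict]
    have h : ContinuousOn (fun p : (ι → ℂ) × ℝ => G (z + circleMap 0 1 p.2 • p.1))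
        (Metric.ball 0 r ×ˢ Ioc 0 (2 * π)) :=
      hG.continuousOn.comp (by fun_prop) fun p hp => hdisc hp.1 (by simp)
    exact (h.aestronglyMeasurable (Metric.isOpen_ball.measurableSet.prod
      measurableSet_Ioc)).enorm.pow_const n
  have hpi : ENNReal.ofReal (2 * π) ≠ 0 := by simp [Real.pi_pos]
  refine (ENNReal.mul_le_mul_iff_right hpi ENNReal.ofReal_ne_top).1 ?_
  calc ENNReal.ofReal (2 * π) * (volume (Metric.ball (0 : ι → ℂ) r) * ‖G z‖ₑ ^ n)
      = ∫⁻ _ in Metric.ball (0 : ι → ℂ) r, ENNReal.ofReal (2 * π) * ‖G z‖ₑ ^ n := by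
        rw [setLIntegral_const]
        ring
    _ ≤ ∫⁻ w in Metric.ball (0 : ι → ℂ) r, ∫⁻ θ in Ioc 0 (2 * π),
          ‖G (z + circleMap 0 1 θ • w)‖ₑ ^ n :=
        setLIntegral_mono' Metric.isOpen_ball.measurableSet fun w hw => hmean hw
    _ = ∫⁻ θ in Ioc 0 (2 * π), ∫⁻ w in Metric.ball (0 : ι → ℂ) r,
          ‖G (z + circleMap 0 1 θ • w)‖ₑ ^ n := lintegral_lintegral_swap hmeas
    _ = ENNReal.ofReal (2 * π) * ∫⁻ w in Metric.ball (0 : ι → ℂ) r, ‖G (z + w)‖ₑ ^ n := by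
        simp [hrot, mul_comm]

theorem measurableEmbedding_tubePoint {ι : Type*} [Countable ι] :
    MeasurableEmbedding fun p : (ι → ℝ) × (ι → ℝ) => tubePoint p.1 p.2 :=
  continuous_tubePoint.measurableEmbedding fun p q h => by
    ext i
    · simpa [tubePoint] using congr_arg Complex.re (congr_fun h i)
    · simpa [tubePoint] using congr_arg Complex.im (congr_fun h i)

theorem setLIntegral_ball_le_prod (f : (ι → ℂ) → ℝ≥0∞) (r : ℝ) :
    ∫⁻ w in Metric.ball 0 r, f w ≤
      ∫⁻ p in Metric.ball (0 : ι → ℝ) r ×ˢ Metric.ball (0 : ι → ℝ) r, f (tubePoint p.1 p.2) := by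
  rw [← volume_preserving_tubePoint.setLIntegral_comp_preimage_emb measurableEmbedding_tubePoint]
  refine lintegral_mono_set fun p hp => ?_
  rw [mem_preimage, mem_ball_zero_iff] at hp
  constructor <;> rw [mem_ball_zero_iff] <;>
    refine (pi_norm_le_iff_of_nonneg (norm_nonneg _)).2 (fun i => ?_) |>.trans_lt hp
  · simpa [tubePoint] using
      (Complex.abs_re_le_norm (tubePoint p.1 p.2 i)).trans (norm_le_pi_norm _ i)
  · simpa [tubePoint] using
      (Complex.abs_im_le_norm (tubePoint p.1 p.2 i)).trans (norm_le_pi_norm _ i)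

theorem lintegral_setLIntegral_ball_add_le {f : (ι → ℂ) → ℝ≥0∞} (hf : Measurable f) (y : ι → ℝ)
    (r : ℝ) :
    ∫⁻ x, ∫⁻ w in Metric.ball 0 r, f (tubePoint x y + w) ≤
      volume (Metric.ball (0 : ι → ℝ) r) * ∫⁻ v in Metric.ball y r, ∫⁻ x, f (tubePoint x v) := by
  let B := Metric.ball (0 : ι → ℝ) r
  have htp : Measurable fun p : (ι → ℝ) × (ι → ℝ) => tubePoint p.1 p.2 :=
    continuous_tubePoint.measurable
  have htrans : ∀ u v, ∫⁻ x, f (tubePoint (x + u) (y + v)) = ∫⁻ x, f (tubePoint x (y + v)) :=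
    fun u v => lintegral_add_right_eq_self (fun x => f (tubePoint x (y + v))) u
  calc ∫⁻ x, ∫⁻ w in Metric.ball 0 r, f (tubePoint x y + w)
      ≤ ∫⁻ x, ∫⁻ p in B ×ˢ B, f (tubePoint (x + p.1) (y + p.2)) := by
        gcongr with x
        simpa only [tubePoint_add] using
          setLIntegral_ball_le_prod (fun w => f (tubePoint x y + w)) r
    _ = ∫⁻ p in B ×ˢ B, ∫⁻ x, f (tubePoint x (y + p.2)) := by
        rw [lintegral_lintegral_swap]
        · simp only [htrans]
        · exact (hf.comp (htp.comp (by fun_prop :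
            Measurable fun q : (ι → ℝ) × (ι → ℝ) × (ι → ℝ) =>
              (q.1 + q.2.1, y + q.2.2)))).aemeasurable
    _ = volume B * ∫⁻ v in B, ∫⁻ x, f (tubePoint x (y + v)) := by
        rw [Measure.volume_eq_prod, ← Measure.prod_restrict, lintegral_prod]
        · simp [mul_comm]
        · exact (Measurable.lintegral_prod_left' (hf.comp (htp.comp (by fun_prop :
            Measurable fun q : (ι → ℝ) × (ι → ℝ) × (ι → ℝ) =>
              (q.1, y + q.2.2))))).aemeasurable
    _ = volume B * ∫⁻ v in Metric.ball y r, ∫⁻ x, f (tubePoint x v) := by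
        have h := (measurePreserving_add_left volume y).setLIntegral_comp_preimage_emb
          (measurableEmbedding_addLeft y) (fun v => ∫⁻ x, f (tubePoint x v)) (Metric.ball y r)
        rw [preimage_add_ball, sub_self] at h
        rw [h]

theorem volume_ball_mul_sliceNormSq_le {G : (ι → ℂ) → ℂ} {y : ι → ℝ} {r : ℝ}
    (hG : DifferentiableOn ℂ G (tube (Metric.ball y r))) :
    volume (Metric.ball (0 : ι → ℂ) r) * sliceNormSq G y ≤
      volume (Metric.ball (0 : ι → ℝ) r) * ∫⁻ v in Metric.ball y r, sliceNormSq G v := by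
  classical
  let f : (ι → ℂ) → ℝ≥0∞ := (tube (Metric.ball y r)).piecewise (fun z => ‖G z‖ₑ ^ 2) 0
  have hfG {z : ι → ℂ} (hz : z ∈ tube (Metric.ball y r)) : f z = ‖G z‖ₑ ^ 2 :=
    piecewise_eq_of_mem _ _ _ hz
  have hf : Measurable f :=
    ((ENNReal.continuous_pow 2).comp_continuousOn hG.continuousOn.enorm).measurable_piecewise
      continuousOn_const (isOpen_tube Metric.isOpen_ball).measurableSet
  have hball (x : ι → ℝ) : Metric.ball (tubePoint x y) r ⊆ tube (Metric.ball y r) := by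
    intro z hz
    have h : (fun i => (z i).im) - y = fun i => ((z - tubePoint x y) i).im := by
      ext i
      simp [tubePoint]
    rw [tube, mem_ofPred_eq, mem_ball_iff_norm, h]
    exact ((pi_norm_le_iff_of_nonneg (norm_nonneg _)).2 fun i =>
      (Complex.abs_im_le_norm _).trans (norm_le_pi_norm _ i)).trans_lt (mem_ball_iff_norm.1 hz)
  have hmean (x : ι → ℝ) : volume (Metric.ball (0 : ι → ℂ) r) * ‖G (tubePoint x y)‖ₑ ^ 2 ≤
      ∫⁻ w in Metric.ball 0 r, f (tubePoint x y + w) := by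
    refine (volume_ball_mul_enorm_pow_le (hG.mono (hball x)) 2).trans_eq ?_
    refine setLIntegral_congr_fun Metric.isOpen_ball.measurableSet fun w hw => ?_
    refine (hfG (hball x ?_)).symm
    rwa [mem_ball_iff_norm, add_sub_cancel_left, ← mem_ball_zero_iff]
  calc volume (Metric.ball (0 : ι → ℂ) r) * sliceNormSq G y
      = ∫⁻ x, volume (Metric.ball (0 : ι → ℂ) r) * ‖G (tubePoint x y)‖ₑ ^ 2 :=
        (lintegral_const_mul' _ _ measure_ball_lt_top.ne).symm
    _ ≤ ∫⁻ x, ∫⁻ w in Metric.ball 0 r, f (tubePoint x y + w) := lintegral_mono hmean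
    _ ≤ _ := lintegral_setLIntegral_ball_add_le hf y r
    _ = volume (Metric.ball (0 : ι → ℝ) r) * ∫⁻ v in Metric.ball y r, sliceNormSq G v := by
        rw [setLIntegral_congr_fun Metric.isOpen_ball.measurableSet fun v hv =>
          lintegral_congr fun x => hfG (tubePoint_mem_tube.2 hv)]
        rfl

theorem exists_sliceNormSq_le_of_isCompact {Ω K : Set (ι → ℝ)} {G : (ι → ℂ) → ℂ} (hΩ : IsOpen Ω)
    (hG : DifferentiableOn ℂ G (tube Ω))
    (hG₂ : ∀ L ⊆ Ω, IsCompact L → ∫⁻ y in L, sliceNormSq G y < ⊤) (hK : IsCompact K)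
    (hKΩ : K ⊆ Ω) : ∃ M < ⊤, ∀ y ∈ K, sliceNormSq G y ≤ M := by
  obtain ⟨r, hr, hrΩ⟩ := hK.exists_cthickening_subset_open hΩ hKΩ
  have hB : volume (Metric.ball (0 : ι → ℂ) r) ≠ 0 := (Metric.measure_ball_pos _ _ hr).ne'
  refine ⟨(volume (Metric.ball (0 : ι → ℂ) r))⁻¹ * (volume (Metric.ball (0 : ι → ℝ) r) *
    ∫⁻ v in Metric.cthickening r K, sliceNormSq G v), ?_, fun y hy => ?_⟩
  · exact ENNReal.mul_lt_top (ENNReal.inv_lt_top.2 hB.bot_lt)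
      (ENNReal.mul_lt_top measure_ball_lt_top (hG₂ _ hrΩ hK.cthickening))
  · have hball : Metric.ball y r ⊆ Metric.cthickening r K :=
      (Metric.ball_subset_thickening hy r).trans (Metric.thickening_subset_cthickening r K)
    rw [← ENNReal.mul_le_iff_le_inv hB measure_ball_lt_top.ne]
    exact (volume_ball_mul_sliceNormSq_le (hG.mono fun _ hz => hrΩ (hball hz))).trans (by gcongr)

end SubMeanValue

/-! ### Densities of Fourier–Laplace transforms -/

section ExponentialDecay

theorem integrable_exp_neg_mul_norm {E : Type*} [NormedAddCommGroup E] [MeasurableSpace E]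
    [BorelSpace E] [SecondCountableTopology E] {μ : Measure E} [μ.HasTemperateGrowth] {c : ℝ}
    (hc : 0 < c) : Integrable (fun x : E => Real.exp (-(c * ‖x‖))) μ := by
  have hcont : Continuous fun x : E => Real.exp (-(c * ‖x‖)) := by fun_prop
  let n := μ.integrablePower
  have h := integrable_of_le_of_pow_mul_le (k := 0) (C₁ := 1) (C₂ := n.factorial / c ^ n) (μ := μ)
    (f := fun x : E => Real.exp (-(c * ‖x‖))) (fun x => ?_) (fun x => ?_) hcont.aestronglyMeasurable
  · simpa only [pow_zero, one_mul, Real.norm_of_nonneg (Real.exp_nonneg _)] using h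
  · rw [Real.norm_of_nonneg (Real.exp_nonneg _), Real.exp_le_one_iff, neg_nonpos]
    positivity
  · have h := Real.pow_div_factorial_le_exp (c * ‖x‖) (by positivity) n
    rw [div_le_iff₀ (by positivity), mul_pow] at h
    rw [Real.norm_of_nonneg (Real.exp_nonneg _), zero_add, Real.exp_neg, ← div_eq_mul_inv,
      div_le_div_iff₀ (by positivity) (by positivity)]
    linarith

end ExponentialDecay

section Density

variable {ι : Type*} [Fintype ι]

theorem abs_dotProduct_le (y ξ : ι → ℝ) : |y ⬝ᵥ ξ| ≤ Fintype.card ι * ‖y‖ * ‖ξ‖ := by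
  calc |y ⬝ᵥ ξ| ≤ ∑ i, |y i * ξ i| := Finset.abs_sum_le_sum_abs _ _
    _ ≤ ∑ _ : ι, ‖y‖ * ‖ξ‖ := by
        gcongr with i
        rw [abs_mul]
        exact mul_le_mul (norm_le_pi_norm y i) (norm_le_pi_norm ξ i) (abs_nonneg _) (norm_nonneg _)
    _ = _ := by simp [mul_assoc]

theorem norm_expTilt_le (y w : ι → ℝ) (g : (ι → ℝ) → ℂ) (ξ : ι → ℝ) :
    ‖expTilt w g ξ‖ ≤
      Real.exp (2 * π * (Fintype.card ι * ‖w - y‖) * ‖ξ‖) * ‖expTilt y g ξ‖ := by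
  rw [← sub_add_cancel w y, ← expTilt_expTilt, expTilt, norm_smul, add_sub_cancel_right,
    Real.norm_of_nonneg (Real.exp_nonneg _)]
  gcongr
  have h := (abs_le.1 (abs_dotProduct_le (w - y) ξ)).1
  nlinarith [Real.pi_pos]

theorem exp_mul_norm_le_one_add_sum {ε : ℝ} (hε : 0 < ε) (ξ : ι → ℝ) :
    Real.exp (ε * ‖ξ‖) ≤ 1 + ∑ i, (Real.exp (ε * ξ i) + Real.exp (-(ε * ξ i))) := by
  let S := 1 + ∑ i, (Real.exp (ε * ξ i) + Real.exp (-(ε * ξ i)))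
  have hS : 1 ≤ S := le_add_of_nonneg_right (by positivity)
  have hcoord (i : ι) : Real.exp (ε * |ξ i|) ≤ S := by
    have hle : Real.exp (ε * |ξ i|) ≤ Real.exp (ε * ξ i) + Real.exp (-(ε * ξ i)) := by
      rcases abs_cases (ξ i) with h | h <;> rw [h.1]
      · exact le_add_of_nonneg_right (Real.exp_nonneg _)
      · rw [mul_neg]
        exact le_add_of_nonneg_left (Real.exp_nonneg _)
    have hsum := Finset.single_le_sum
      (f := fun i => Real.exp (ε * ξ i) + Real.exp (-(ε * ξ i))) (fun i _ => by positivity)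
      (Finset.mem_univ i)
    exact (hle.trans hsum).trans (le_add_of_nonneg_left zero_le_one)
  rw [← Real.le_log_iff_exp_le (by positivity), mul_comm, ← le_div_iff₀ hε,
    pi_norm_le_iff_of_nonneg (div_nonneg (Real.log_nonneg hS) hε.le)]
  intro i
  rw [Real.norm_eq_abs, le_div_iff₀ hε, mul_comm, Real.le_log_iff_exp_le (by positivity)]
  exact hcoord i

/-- The densities `g` for which all the tilted densities `e^{-2π⟨y,ξ⟩} g(ξ)`, `y ∈ Ω`, are square
integrable: those whose Fourier–Laplace transform has square-integrable slices over `Ω`. -/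
structure IsDensity (Ω : Set (ι → ℝ)) (g : (ι → ℝ) → ℂ) : Prop where
  aestronglyMeasurable : AEStronglyMeasurable g
  memLp_expTilt : ∀ y ∈ Ω, MemLp (expTilt y g) 2

namespace IsDensity

variable {Ω : Set (ι → ℝ)} {f g : (ι → ℝ) → ℂ} {y : ι → ℝ}

theorem exists_memLp_exp_mul_norm (hg : IsDensity Ω g) (hΩ : Ω ∈ 𝓝 y) :
    ∃ ε > 0, MemLp (fun ξ => Real.exp (ε * ‖ξ‖) * ‖expTilt y g ξ‖) 2 := by
  classical
  obtain ⟨δ, hδ, hδΩ⟩ := Metric.nhds_basis_closedBall.mem_iff.1 hΩ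
  have hmem (i : ι) (s : ℝ) (hs : |s| ≤ δ) : MemLp (expTilt (y + Pi.single i s) g) 2 :=
    hg.memLp_expTilt _ (hδΩ (by simpa [mem_closedBall_iff_norm, Pi.norm_single] using hs))
  have hy : MemLp (expTilt y g) 2 := hg.memLp_expTilt _ (mem_of_mem_nhds hΩ)
  have hbound := hy.norm.add (memLp_finsetSum Finset.univ fun i _ =>
    (hmem i (-δ) (by rw [abs_neg, abs_of_pos hδ])).norm.add (hmem i δ (abs_of_pos hδ).le).norm)
  have htilt (i : ι) (s : ℝ) (ξ : ι → ℝ) : ‖expTilt (y + Pi.single i s) g ξ‖ =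
      Real.exp (-(2 * π * s * ξ i)) * ‖expTilt y g ξ‖ := by
    rw [add_comm, ← expTilt_expTilt, expTilt, single_dotProduct, norm_smul,
      Real.norm_of_nonneg (Real.exp_nonneg _), mul_assoc _ s]
  refine ⟨2 * π * δ, by positivity, hbound.mono' ?_ (ae_of_all _ fun ξ => ?_)⟩
  · exact (Continuous.aestronglyMeasurable (by fun_prop)).mul hy.1.norm
  · simp only [Pi.add_apply, htilt, mul_neg, neg_mul, neg_neg]
    rw [Real.norm_of_nonneg (by positivity)]
    calc Real.exp (2 * π * δ * ‖ξ‖) * ‖expTilt y g ξ‖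
        ≤ (1 + ∑ i, (Real.exp (2 * π * δ * ξ i) + Real.exp (-(2 * π * δ * ξ i)))) *
          ‖expTilt y g ξ‖ := by
          gcongr
          exact exp_mul_norm_le_one_add_sum (by positivity) ξ
      _ = _ := by simp only [add_mul, one_mul, Finset.sum_mul]

theorem exists_integrable_exp_mul_norm (hg : IsDensity Ω g) (hΩ : Ω ∈ 𝓝 y) :
    ∃ ε > 0, Integrable fun ξ => Real.exp (ε * ‖ξ‖) * ‖expTilt y g ξ‖ := by
  obtain ⟨ε, hε, h⟩ := hg.exists_memLp_exp_mul_norm hΩ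
  have hcont : Continuous fun ξ : ι → ℝ => Real.exp (-(ε / 2 * ‖ξ‖)) := by fun_prop
  have hexp : MemLp (fun ξ : ι → ℝ => Real.exp (-(ε / 2 * ‖ξ‖))) 2 := by
    rw [memLp_two_iff_integrable_sq hcont.aestronglyMeasurable]
    refine (integrable_exp_neg_mul_norm hε).congr (ae_of_all _ fun ξ => ?_)
    dsimp only
    rw [← Real.exp_nat_mul]
    congr 1
    push_cast
    ring
  refine ⟨ε / 2, half_pos hε, (hexp.integrable_mul h).congr (ae_of_all _ fun ξ => ?_)⟩
  rw [Pi.mul_apply, ← mul_assoc, ← Real.exp_add]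
  ring_nf

theorem integrable_expTilt (hg : IsDensity Ω g) (hΩ : Ω ∈ 𝓝 y) : Integrable (expTilt y g) := by
  obtain ⟨ε, hε, h⟩ := hg.exists_integrable_exp_mul_norm hΩ
  refine h.mono' (aestronglyMeasurable_expTilt hg.aestronglyMeasurable y) (ae_of_all _ fun ξ => ?_)
  exact le_mul_of_one_le_left (norm_nonneg _) (Real.one_le_exp (by positivity))

theorem sliceNormSq_fourierLaplace (hg : IsDensity Ω g) (hΩ : Ω ∈ 𝓝 y) :
    sliceNormSq (fourierLaplace g) y =
      ∫⁻ ξ, ‖g ξ‖ₑ ^ 2 * ENNReal.ofReal (Real.exp (-(4 * π * (y ⬝ᵥ ξ)))) := by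
  simp only [_root_.sliceNormSq_fourierLaplace (hg.integrable_expTilt hΩ)
    (hg.memLp_expTilt y (mem_of_mem_nhds hΩ)), enorm_expTilt_sq]

theorem mul_of_norm_le (hg : IsDensity Ω g) (hΩ : IsOpen Ω) {φ : (ι → ℝ) → ℂ}
    (hφ : AEStronglyMeasurable φ) {C : ℝ} {n : ℕ} (hC : ∀ ξ, ‖φ ξ‖ ≤ C * ‖ξ‖ ^ n) :
    IsDensity Ω fun ξ => φ ξ * g ξ := by
  refine ⟨hφ.mul hg.aestronglyMeasurable, fun y hy => ?_⟩
  obtain ⟨ε, hε, h⟩ := hg.exists_memLp_exp_mul_norm (hΩ.mem_nhds hy)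
  refine (h.const_mul (|C| * (n.factorial / ε ^ n))).mono'
    (aestronglyMeasurable_expTilt (hφ.mul hg.aestronglyMeasurable) y) (ae_of_all _ fun ξ => ?_)
  have hle : ‖φ ξ‖ ≤ |C| * (n.factorial / ε ^ n) * Real.exp (ε * ‖ξ‖) :=
    calc ‖φ ξ‖ ≤ |C| * ‖ξ‖ ^ n := (hC ξ).trans (by gcongr; exact le_abs_self C)
      _ = |C| * (n.factorial / ε ^ n) * ((ε * ‖ξ‖) ^ n / n.factorial) := by
        rw [mul_pow]
        field_simp
      _ ≤ |C| * (n.factorial / ε ^ n) * Real.exp (ε * ‖ξ‖) := by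
        gcongr
        exact Real.pow_div_factorial_le_exp _ (by positivity) n
  rw [expTilt, ← mul_smul_comm, norm_mul, ← mul_assoc]
  gcongr
  exact le_rfl

end IsDensity

section Derivative

theorem norm_cexp_dotProduct_mul (z : ι → ℂ) (g : (ι → ℝ) → ℂ) (ξ : ι → ℝ) :
    ‖Complex.exp (2 * π * Complex.I * (z ⬝ᵥ fun i => (ξ i : ℂ))) * g ξ‖ =
      ‖expTilt (fun i => (z i).im) g ξ‖ := by
  conv_lhs => rw [← tubePoint_re_im z]
  rw [cexp_tubePoint_mul, norm_mul, mul_right_comm, ← Complex.ofReal_ofNat, ← Complex.ofReal_mul,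
    ← Complex.ofReal_mul, Complex.norm_exp_ofReal_mul_I, one_mul, expTilt]

theorem continuous_cexp_dotProduct (z : ι → ℂ) : Continuous fun ξ : ι → ℝ =>
    Complex.exp (2 * π * Complex.I * (z ⬝ᵥ fun i => (ξ i : ℂ))) := by
  have : Continuous fun ξ : ι → ℝ => z ⬝ᵥ fun i => (ξ i : ℂ) :=
    continuous_const.dotProduct (by fun_prop)
  fun_prop

/-- The continuous linear form `z ↦ ⟨z,ξ⟩` on `ℂ^ι` attached to a real vector `ξ`. -/
def dotProductCLM (ξ : ι → ℝ) : (ι → ℂ) →L[ℂ] ℂ :=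
  ∑ i, (ξ i : ℂ) • ContinuousLinearMap.proj i

theorem dotProductCLM_apply (ξ : ι → ℝ) (z : ι → ℂ) :
    dotProductCLM ξ z = z ⬝ᵥ fun i => (ξ i : ℂ) := by
  simp [dotProductCLM, dotProduct, mul_comm]

theorem norm_dotProductCLM_le (ξ : ι → ℝ) : ‖dotProductCLM ξ‖ ≤ Fintype.card ι * ‖ξ‖ := by
  refine ContinuousLinearMap.opNorm_le_bound _ (by positivity) fun z => ?_
  rw [dotProductCLM_apply]
  calc ‖z ⬝ᵥ fun i => (ξ i : ℂ)‖ ≤ ∑ i, ‖z i * (ξ i : ℂ)‖ := norm_sum_le _ _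
    _ ≤ ∑ _ : ι, ‖ξ‖ * ‖z‖ := by
        gcongr with i
        rw [norm_mul, Complex.norm_real, mul_comm]
        exact mul_le_mul (norm_le_pi_norm ξ i) (norm_le_pi_norm z i) (norm_nonneg _) (norm_nonneg _)
    _ = _ := by simp [mul_assoc]

theorem continuous_dotProductCLM : Continuous (dotProductCLM : (ι → ℝ) → (ι → ℂ) →L[ℂ] ℂ) := by
  unfold dotProductCLM
  fun_prop

/-- The derivative at `z` of the integrand of `fourierLaplace g`. -/
def fourierLaplaceDeriv (g : (ι → ℝ) → ℂ) (z : ι → ℂ) (ξ : ι → ℝ) : (ι → ℂ) →L[ℂ] ℂ :=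
  (2 * π * Complex.I * (Complex.exp (2 * π * Complex.I * (z ⬝ᵥ fun i => (ξ i : ℂ))) * g ξ)) •
    dotProductCLM ξ

theorem norm_fourierLaplaceDeriv_le (g : (ι → ℝ) → ℂ) {z w : ι → ℂ} {ε : ℝ} (hε : 0 < ε)
    (hw : 2 * π * (Fintype.card ι * ‖w - z‖) ≤ ε / 2) (ξ : ι → ℝ) :
    ‖fourierLaplaceDeriv g w ξ‖ ≤ 4 * π * Fintype.card ι / ε *
      (Real.exp (ε * ‖ξ‖) * ‖expTilt (fun i => (z i).im) g ξ‖) := by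
  have him : ‖(fun i => (w i).im) - fun i => (z i).im‖ ≤ ‖w - z‖ :=
    (pi_norm_le_iff_of_nonneg (norm_nonneg _)).2 fun i => by
      simpa using (Complex.abs_im_le_norm ((w - z) i)).trans (norm_le_pi_norm (w - z) i)
  have hnorm : ‖ξ‖ ≤ 2 / ε * Real.exp (ε / 2 * ‖ξ‖) :=
    calc ‖ξ‖ = 2 / ε * (ε / 2 * ‖ξ‖) := by field_simp
      _ ≤ 2 / ε * Real.exp (ε / 2 * ‖ξ‖) := by
        gcongr
        exact (le_add_of_nonneg_right zero_le_one).trans (Real.add_one_le_exp _)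
  have htilt : ‖expTilt (fun i => (w i).im) g ξ‖ ≤
      Real.exp (ε / 2 * ‖ξ‖) * ‖expTilt (fun i => (z i).im) g ξ‖ := by
    refine (norm_expTilt_le (fun i => (z i).im) _ g ξ).trans ?_
    gcongr
    exact le_trans (by gcongr) hw
  have hconst : ‖(2 * π * Complex.I : ℂ)‖ = 2 * π := by simp [Real.pi_pos.le]
  rw [fourierLaplaceDeriv, norm_smul, norm_mul, hconst, norm_cexp_dotProduct_mul]
  calc 2 * π * ‖expTilt (fun i => (w i).im) g ξ‖ * ‖dotProductCLM ξ‖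
      ≤ 2 * π * (Real.exp (ε / 2 * ‖ξ‖) * ‖expTilt (fun i => (z i).im) g ξ‖) *
        (Fintype.card ι * (2 / ε * Real.exp (ε / 2 * ‖ξ‖))) := by
        gcongr
        exact (norm_dotProductCLM_le ξ).trans (by gcongr)
    _ = 4 * π * Fintype.card ι / ε * (Real.exp (ε / 2 * ‖ξ‖ + ε / 2 * ‖ξ‖) *
        ‖expTilt (fun i => (z i).im) g ξ‖) := by
        rw [Real.exp_add]
        ring
    _ = _ := by ring_nf

theorem aestronglyMeasurable_fourierLaplaceDeriv {g : (ι → ℝ) → ℂ} (hg : AEStronglyMeasurable g)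
    (z : ι → ℂ) : AEStronglyMeasurable (fourierLaplaceDeriv g z) :=
  (((continuous_cexp_dotProduct z).aestronglyMeasurable.mul hg).const_mul _).smul
    continuous_dotProductCLM.aestronglyMeasurable

theorem hasFDerivAt_cexp_dotProduct_mul (g : (ι → ℝ) → ℂ) (z : ι → ℂ) (ξ : ι → ℝ) :
    HasFDerivAt
      (fun z : ι → ℂ => Complex.exp (2 * π * Complex.I * (z ⬝ᵥ fun i => (ξ i : ℂ))) * g ξ)
      (fourierLaplaceDeriv g z ξ) z := by
  simp only [fourierLaplaceDeriv, ← dotProductCLM_apply]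
  refine ((((dotProductCLM ξ).hasFDerivAt.const_mul _).cexp).mul_const (g ξ)).congr_fderiv ?_
  simp only [smul_smul]
  congr 1
  ring

end Derivative

namespace IsDensity

variable {Ω : Set (ι → ℝ)} {g : (ι → ℝ) → ℂ} {z : ι → ℂ}

theorem integrable_cexp_mul (hg : IsDensity Ω g) (hΩ : Ω ∈ 𝓝 fun i => (z i).im) :
    Integrable fun ξ : ι → ℝ =>
      Complex.exp (2 * π * Complex.I * (z ⬝ᵥ fun i => (ξ i : ℂ))) * g ξ :=
  (hg.integrable_expTilt hΩ).mono
    ((continuous_cexp_dotProduct z).aestronglyMeasurable.mul hg.aestronglyMeasurable)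
    (ae_of_all _ fun ξ => (norm_cexp_dotProduct_mul z g ξ).le)

theorem integrable_fourierLaplaceDeriv (hg : IsDensity Ω g) (hΩ : Ω ∈ 𝓝 fun i => (z i).im) :
    Integrable (fourierLaplaceDeriv g z) := by
  obtain ⟨ε, hε, h⟩ := hg.exists_integrable_exp_mul_norm hΩ
  refine (h.const_mul (4 * π * Fintype.card ι / ε)).mono'
    (aestronglyMeasurable_fourierLaplaceDeriv hg.aestronglyMeasurable z) (ae_of_all _ ?_)
  exact norm_fourierLaplaceDeriv_le g hε (by simpa using (half_pos hε).le)

theorem hasFDerivAt_fourierLaplace (hg : IsDensity Ω g) (hΩ : Ω ∈ 𝓝 fun i => (z i).im) :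
    HasFDerivAt (fourierLaplace g) (∫ ξ, fourierLaplaceDeriv g z ξ) z := by
  obtain ⟨ε, hε, h⟩ := hg.exists_integrable_exp_mul_norm hΩ
  let s : Set (ι → ℂ) := {w | 2 * π * (Fintype.card ι * ‖w - z‖) < ε / 2}
  have hs : s ∈ 𝓝 z :=
    (isOpen_lt (by fun_prop) continuous_const).mem_nhds (by simpa [s] using hε)
  exact hasFDerivAt_integral_of_dominated_of_fderiv_le hs
    (Eventually.of_forall fun w =>
      (continuous_cexp_dotProduct w).aestronglyMeasurable.mul hg.aestronglyMeasurable)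
    (hg.integrable_cexp_mul hΩ) (aestronglyMeasurable_fourierLaplaceDeriv hg.aestronglyMeasurable z)
    (ae_of_all _ fun ξ w hw => norm_fourierLaplaceDeriv_le g hε (le_of_lt hw) ξ)
    (h.const_mul (4 * π * Fintype.card ι / ε))
    (ae_of_all _ fun ξ w _ => hasFDerivAt_cexp_dotProduct_mul g w ξ)

theorem differentiableOn_fourierLaplace (hg : IsDensity Ω g) (hΩ : IsOpen Ω) :
    DifferentiableOn ℂ (fourierLaplace g) (tube Ω) := fun _ hz =>
  (hg.hasFDerivAt_fourierLaplace (hΩ.mem_nhds hz)).differentiableAt.differentiableWithinAt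

theorem fderiv_fourierLaplace_single [DecidableEq ι] (hg : IsDensity Ω g)
    (hΩ : Ω ∈ 𝓝 fun i => (z i).im) (j : ι) :
    fderiv ℂ (fourierLaplace g) z (Pi.single j 1) =
      fourierLaplace (fun ξ => 2 * π * Complex.I * ξ j * g ξ) z := by
  rw [(hg.hasFDerivAt_fourierLaplace hΩ).fderiv,
    ContinuousLinearMap.integral_apply (hg.integrable_fourierLaplaceDeriv hΩ), fourierLaplace]
  refine integral_congr_ae (ae_of_all _ fun ξ => ?_)
  simp only [fourierLaplaceDeriv, smul_apply, dotProductCLM_apply,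
    single_one_dotProduct, smul_eq_mul]
  ring

end IsDensity

end Density

/-! ### The Paley–Wiener representation -/

section PaleyWiener

variable {ι : Type*} [Fintype ι] {Ω : Set (ι → ℝ)} {G : (ι → ℂ) → ℂ} {f g ψ : (ι → ℝ) → ℂ}
  {y w : ι → ℝ}

theorem sliceNormSq_comp_neg (G : (ι → ℂ) → ℂ) (y : ι → ℝ) :
    sliceNormSq (fun z => G (-z)) y = sliceNormSq G (-y) := by
  simp only [sliceNormSq, neg_tubePoint]
  exact lintegral_neg_eq_self (μ := volume) fun x => ‖G (tubePoint x (-y))‖ₑ ^ 2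

theorem lintegral_enorm_mul_slice_le {F : (ι → ℂ) → ℂ}
    (hF : Continuous fun x => F (tubePoint x y)) :
    ∫⁻ x, ‖F (tubePoint x y) * G (tubePoint x y)‖ₑ ≤ sliceNormSq F y + sliceNormSq G y := by
  rw [sliceNormSq, sliceNormSq, ← lintegral_add_left (hF.enorm.measurable.pow_const 2)]
  refine lintegral_mono fun x => ?_
  rw [enorm_mul]
  rcases le_total ‖F (tubePoint x y)‖ₑ ‖G (tubePoint x y)‖ₑ with h | h
  · exact (mul_le_mul_left h _).trans ((sq _).ge.trans le_add_self)
  · exact (mul_le_mul_right h _).trans ((sq _).ge.trans le_self_add)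

theorem enorm_expTilt_add_smul_sq_le (y w : ι → ℝ) (g : (ι → ℝ) → ℂ) (ξ : ι → ℝ) {t : ℝ}
    (ht : t ∈ Icc (0 : ℝ) 1) : ‖expTilt (y + t • (w - y)) g ξ‖ₑ ^ 2 ≤
      ‖expTilt y g ξ‖ₑ ^ 2 + ‖expTilt w g ξ‖ₑ ^ 2 := by
  have hconv := convexOn_exp.2 (mem_univ (-(4 * π * (y ⬝ᵥ ξ)))) (mem_univ (-(4 * π * (w ⬝ᵥ ξ))))
    (sub_nonneg.2 ht.2) ht.1 (sub_add_cancel 1 t)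
  have harg : -(4 * π * ((y + t • (w - y)) ⬝ᵥ ξ)) =
      (1 - t) • -(4 * π * (y ⬝ᵥ ξ)) + t • -(4 * π * (w ⬝ᵥ ξ)) := by
    simp only [add_dotProduct, smul_dotProduct, sub_dotProduct, smul_eq_mul]
    ring
  simp only [enorm_expTilt_sq, ← mul_add]
  rw [← ENNReal.ofReal_add (Real.exp_nonneg _) (Real.exp_nonneg _), harg]
  gcongr
  refine hconv.trans (add_le_add ?_ ?_)
  · exact mul_le_of_le_one_left (Real.exp_nonneg _) (by linarith [ht.1])
  · exact mul_le_of_le_one_left (Real.exp_nonneg _) ht.2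

theorem isDensity_univ_of_hasCompactSupport (hψ : Continuous ψ) (hs : HasCompactSupport ψ) :
    IsDensity univ ψ := by
  refine ⟨hψ.aestronglyMeasurable, fun y _ => ?_⟩
  have hcont := (contDiff_expTilt (n := 0) (contDiff_zero.2 hψ) y).continuous
  exact hcont.memLp_of_hasCompactSupport (hasCompactSupport_expTilt hs y)

theorem integral_fourierLaplace_neg_mul_slice_eq (hΩ : Convex ℝ Ω)
    (hG : DifferentiableOn ℂ G (tube Ω))
    (hM : ∀ K ⊆ Ω, IsCompact K → ∃ M < ⊤, ∀ y ∈ K, sliceNormSq G y ≤ M) (hψ : IsDensity univ ψ)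
    (hy : y ∈ Ω) (hw : w ∈ Ω) :
    ∫ x, fourierLaplace ψ (-tubePoint x y) * G (tubePoint x y) =
      ∫ x, fourierLaplace ψ (-tubePoint x w) * G (tubePoint x w) := by
  have hseg (t : ℝ) (ht : t ∈ Icc (0 : ℝ) 1) : y + t • (w - y) ∈ Ω :=
    hΩ.add_smul_sub_mem hy hw ht
  obtain ⟨M, hM, hGM⟩ := hM ((fun t : ℝ => y + t • (w - y)) '' Icc 0 1)
    (image_subset_iff.2 hseg) (isCompact_Icc.image (by fun_prop))
  let A (v : ι → ℝ) : ℝ≥0∞ := ∫⁻ ξ, ‖expTilt (-v) ψ ξ‖ₑ ^ 2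
  have hA (v : ι → ℝ) : A v < ⊤ := (memLp_two_iff_lintegral_lt_top
    (aestronglyMeasurable_expTilt hψ.aestronglyMeasurable _)).1 (hψ.memLp_expTilt _ (mem_univ _))
  have hψslice (v : ι → ℝ) : sliceNormSq (fun z => fourierLaplace ψ (-z)) v = A v := by
    rw [sliceNormSq_comp_neg, sliceNormSq_fourierLaplace (hψ.integrable_expTilt univ_mem)
      (hψ.memLp_expTilt _ (mem_univ _))]
  have hAseg (t : ℝ) (ht : t ∈ Icc (0 : ℝ) 1) : A (y + t • (w - y)) ≤ A y + A w := by
    rw [← lintegral_add_left'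
      ((aestronglyMeasurable_expTilt hψ.aestronglyMeasurable _).enorm.pow_const 2)]
    refine lintegral_mono fun ξ => ?_
    convert enorm_expTilt_add_smul_sq_le (-y) (-w) ψ ξ ht using 4
    module
  have hdiff : Differentiable ℂ fun z => fourierLaplace ψ (-z) := fun z =>
    (hψ.hasFDerivAt_fourierLaplace univ_mem).differentiableAt.comp z differentiableAt_id.neg
  have h := integral_slice_eq_integral_slice_add (hdiff.differentiableOn.mul hG)
    (ENNReal.add_lt_top.2 ⟨ENNReal.add_lt_top.2 ⟨hA y, hA w⟩, hM⟩) hseg fun t ht =>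
      (lintegral_enorm_mul_slice_le (continuous_comp_tubePoint hdiff.continuous.continuousOn
        (mem_univ _))).trans
      (add_le_add ((hψslice _).trans_le (hAseg t ht)) (hGM _ (mem_image_of_mem _ ht)))
  rwa [add_sub_cancel] at h

theorem exists_memLp_expTilt (hf : MemLp f 2) (y : ι → ℝ) :
    ∃ g : (ι → ℝ) → ℂ, MemLp (expTilt y g) 2 ∧
      (∀ ψ : (ι → ℝ) → ℂ, ContDiff ℝ ∞ ψ → HasCompactSupport ψ →
        ∫ ξ, ψ ξ * g ξ = ∫ x, fourierLaplace ψ (-tubePoint x y) * f x) ∧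
      (Integrable (expTilt y g) → f =ᵐ[volume] fun x => fourierLaplace g (tubePoint x y)) := by
  obtain ⟨fhat, hfhat, htest, hinv⟩ := exists_memLp_fourier hf
  have htilt : expTilt y (expTilt (-y) fhat) = fhat := by
    rw [expTilt_expTilt, add_neg_cancel, expTilt_zero]
  refine ⟨expTilt (-y) fhat, by rwa [htilt], fun ψ hψ hs => ?_, fun hint => ?_⟩
  · have h := htest _ (contDiff_expTilt hψ (-y)) (hasCompactSupport_expTilt hs (-y))
    simp only [fourierLaplace_expTilt, zero_add, ← neg_tubePoint] at h
    simpa only [expTilt, smul_mul_assoc, mul_smul_comm] using h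
  · rw [htilt] at hint
    filter_upwards [hinv hint] with x hx
    rw [hx, fourierLaplace_expTilt, add_neg_cancel]

theorem locallyIntegrable_of_memLp_expTilt (hg : MemLp (expTilt y g) 2) :
    LocallyIntegrable g := by
  have := continuous_dotProduct_right (-y)
  have hcont : Continuous fun ξ => Real.exp (-(2 * π * (-y ⬝ᵥ ξ))) := by fun_prop
  have h : LocallyIntegrable (expTilt (-y) (expTilt y g)) :=
    (hg.locallyIntegrable one_le_two).continuous_smul hcont
  rwa [expTilt_expTilt, neg_add_cancel, expTilt_zero] at h

theorem ae_eq_of_forall_integral_mul_eq (hf : LocallyIntegrable f) (hg : LocallyIntegrable g)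
    (h : ∀ ψ : (ι → ℝ) → ℂ, ContDiff ℝ ∞ ψ → HasCompactSupport ψ →
      ∫ ξ, ψ ξ * f ξ = ∫ ξ, ψ ξ * g ξ) : f =ᵐ[volume] g :=
  ae_eq_of_integral_contDiff_smul_eq hf hg fun ψ hψ hs => by
    simpa only [Complex.real_smul] using h (fun ξ => (ψ ξ : ℂ))
      (Complex.ofRealCLM.contDiff.comp hψ) (hs.comp_left Complex.ofReal_zero)

/- The density read off from the slice at height `y` does not depend on `y`: tested against `ψ` it
gives the integral over `ℝ^ι + iy` of a holomorphic function of `z = x + iy`. -/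
theorem exists_isDensity_eqOn_fourierLaplace (hΩ : IsOpen Ω) (hΩc : Convex ℝ Ω)
    (hG : DifferentiableOn ℂ G (tube Ω))
    (hG₂ : ∀ K ⊆ Ω, IsCompact K → ∫⁻ y in K, sliceNormSq G y < ⊤) :
    ∃ g, IsDensity Ω g ∧ EqOn G (fourierLaplace g) (tube Ω) := by
  have hM (K : Set (ι → ℝ)) (hKΩ : K ⊆ Ω) (hK : IsCompact K) :=
    exists_sliceNormSq_le_of_isCompact hΩ hG hG₂ hK hKΩ
  have hcont {y : ι → ℝ} (hy : y ∈ Ω) := continuous_comp_tubePoint hG.continuousOn hy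
  have hL2 (y : ι → ℝ) (hy : y ∈ Ω) : MemLp (fun x => G (tubePoint x y)) 2 := by
    obtain ⟨M, hM, h⟩ := hM {y} (singleton_subset_iff.2 hy) isCompact_singleton
    exact (memLp_two_iff_lintegral_lt_top (hcont hy).aestronglyMeasurable).2
      ((h y rfl).trans_lt hM)
  choose! g hgL2 htest hinv using fun y hy => exists_memLp_expTilt (hL2 y hy) y
  have hae {y w : ι → ℝ} (hy : y ∈ Ω) (hw : w ∈ Ω) : g y =ᵐ[volume] g w := by
    refine ae_eq_of_forall_integral_mul_eq (locallyIntegrable_of_memLp_expTilt (hgL2 y hy))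
      (locallyIntegrable_of_memLp_expTilt (hgL2 w hw)) fun ψ hψ hs => ?_
    rw [htest y hy ψ hψ hs, htest w hw ψ hψ hs]
    exact integral_fourierLaplace_neg_mul_slice_eq hΩc hG hM
      (isDensity_univ_of_hasCompactSupport hψ.continuous hs) hy hw
  obtain rfl | ⟨y₀, hy₀⟩ := Ω.eq_empty_or_nonempty
  · exact ⟨0, ⟨aestronglyMeasurable_zero, by simp⟩, fun z hz => hz.elim⟩
  have htilt {y : ι → ℝ} (hy : y ∈ Ω) : expTilt y (g y) =ᵐ[volume] expTilt y (g y₀) :=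
    (hae hy hy₀).mono fun ξ hξ => by simp only [expTilt, hξ]
  have hg : IsDensity Ω (g y₀) :=
    ⟨(locallyIntegrable_of_memLp_expTilt (hgL2 y₀ hy₀)).aestronglyMeasurable,
      fun y hy => (hgL2 y hy).ae_eq (htilt hy)⟩
  refine ⟨g y₀, hg, fun z hz => ?_⟩
  have hint := hg.integrable_expTilt (hΩ.mem_nhds hz)
  have h := hinv _ hz (hint.congr (htilt hz).symm)
  rw [fourierLaplace_congr_ae (hae hz hy₀)] at h
  have heq := (Continuous.ae_eq_iff_eq volume (hcont hz) (continuous_fourierLaplace_slice hint)).1 h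
  simpa only [tubePoint_re_im] using congrFun heq fun i => (z i).re

end PaleyWiener

/-! ### Hardy norms over cones -/

section Hardy

theorem ae_nonpos_of_forall_lintegral_mul_exp_le {α : Type*} [MeasurableSpace α] {μ : Measure α}
    {h : α → ℝ≥0∞} {u : α → ℝ} (hh : AEMeasurable h μ) (hu : AEMeasurable u μ) {C : ℝ≥0∞}
    (hC : C < ⊤) (hexp : ∀ n : ℕ, ∫⁻ x, h x * ENNReal.ofReal (Real.exp (n * u x)) ∂μ ≤ C) :
    ∀ᵐ x ∂μ, h x ≠ 0 → u x ≤ 0 := by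
  have hmul (n : ℕ) : n * ∫⁻ x, h x * ENNReal.ofReal (u x) ∂μ ≤ C := by
    rw [← lintegral_const_mul' _ _ (ENNReal.natCast_ne_top n)]
    refine (lintegral_mono fun x => ?_).trans (hexp n)
    rw [mul_left_comm, ← ENNReal.ofReal_natCast, ← ENNReal.ofReal_mul n.cast_nonneg]
    gcongr
    exact (le_add_of_nonneg_right zero_le_one).trans (Real.add_one_le_exp _)
  have hzero : ∫⁻ x, h x * ENNReal.ofReal (u x) ∂μ = 0 := by
    by_contra hne
    obtain ⟨n, hn⟩ := ENNReal.exists_nat_mul_gt hne hC.ne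
    exact (hmul n).not_gt hn
  filter_upwards [(lintegral_eq_zero_iff' (hh.mul hu.ennreal_ofReal)).1 hzero] with x hx hx₀
  simpa [hx₀] using hx

variable {ι : Type*} [Fintype ι] {Ω : Set (ι → ℝ)} {g : (ι → ℝ) → ℂ}

theorem ae_forall_mem_of_forall_mem_ae (hΩ : IsOpen Ω)
    (h : ∀ y ∈ Ω, ∀ᵐ ξ, g ξ ≠ 0 → 0 ≤ y ⬝ᵥ ξ) : ∀ᵐ ξ, g ξ ≠ 0 → ∀ y ∈ Ω, 0 ≤ y ⬝ᵥ ξ := by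
  obtain ⟨D, hDc, hD⟩ := TopologicalSpace.exists_countable_dense (ι → ℝ)
  have hcount : ∀ᵐ ξ, ∀ y ∈ D, y ∈ Ω → g ξ ≠ 0 → 0 ≤ y ⬝ᵥ ξ :=
    (ae_ball_iff hDc).2 fun y _ => by
      by_cases hy : y ∈ Ω
      · exact (h y hy).mono fun ξ hξ _ => hξ
      · exact ae_of_all _ fun ξ hy' => absurd hy' hy
  filter_upwards [hcount] with ξ hξ hg
  by_contra! hneg
  have hopen : IsOpen (Ω ∩ {y | y ⬝ᵥ ξ < 0}) :=
    hΩ.inter (isOpen_lt (continuous_id.dotProduct continuous_const) continuous_const)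
  obtain ⟨y, ⟨hyΩ, hy⟩, hyD⟩ := hD.inter_open_nonempty _ hopen hneg
  exact (hξ y hyD hyΩ hg).not_gt hy

theorem isDensity_of_memLp (hg : MemLp g 2) (hsupp : ∀ᵐ ξ, g ξ ≠ 0 → ∀ y ∈ Ω, 0 ≤ y ⬝ᵥ ξ) :
    IsDensity Ω g := by
  refine ⟨hg.1, fun y hy => hg.mono (aestronglyMeasurable_expTilt hg.1 y) ?_⟩
  filter_upwards [hsupp] with ξ hξ
  by_cases h0 : g ξ = 0
  · simp [expTilt, h0]
  · have := hξ h0 y hy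
    rw [expTilt, norm_smul, Real.norm_of_nonneg (Real.exp_nonneg _)]
    refine mul_le_of_le_one_left (norm_nonneg _) (Real.exp_le_one_iff.2 ?_)
    rw [neg_nonpos]
    positivity

namespace IsDensity

theorem ae_dotProduct_nonneg (hg : IsDensity Ω g) (hΩ : IsOpen Ω)
    (hcone : ∀ t > (0 : ℝ), ∀ y ∈ Ω, t • y ∈ Ω)
    (hbdd : ⨆ y ∈ Ω, sliceNormSq (fourierLaplace g) y < ⊤) :
    ∀ᵐ ξ, g ξ ≠ 0 → ∀ y ∈ Ω, 0 ≤ y ⬝ᵥ ξ := by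
  refine ae_forall_mem_of_forall_mem_ae hΩ fun y hy => ?_
  have hu := (continuous_dotProduct_right y).measurable.const_mul (4 * π) |>.neg
  have hexp (n : ℕ) : ∫⁻ ξ, ‖expTilt y g ξ‖ₑ ^ 2 *
      ENNReal.ofReal (Real.exp (n * -(4 * π * (y ⬝ᵥ ξ)))) ≤
      ⨆ y ∈ Ω, sliceNormSq (fourierLaplace g) y := by
    have hmem : (n + 1 : ℝ) • y ∈ Ω := hcone _ (by positivity) y hy
    refine le_trans (le_of_eq ?_) (le_iSup₂ _ hmem)
    rw [hg.sliceNormSq_fourierLaplace (hΩ.mem_nhds hmem)]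
    refine lintegral_congr fun ξ => ?_
    rw [enorm_expTilt_sq, mul_assoc, ← ENNReal.ofReal_mul (Real.exp_nonneg _), ← Real.exp_add,
      smul_dotProduct, smul_eq_mul]
    ring_nf
  filter_upwards [ae_nonpos_of_forall_lintegral_mul_exp_le
    ((aestronglyMeasurable_expTilt hg.aestronglyMeasurable y).enorm.pow_const 2) hu.aemeasurable
    hbdd hexp] with ξ hξ h0
  have := hξ (by simp [expTilt, h0])
  exact nonneg_of_mul_nonneg_right (neg_nonpos.1 this) (by positivity)

theorem iSup_sliceNormSq_fourierLaplace (hg : IsDensity Ω g) (hΩ : IsOpen Ω) (hne : Ω.Nonempty)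
    (hcone : ∀ t > (0 : ℝ), ∀ y ∈ Ω, t • y ∈ Ω)
    (hsupp : ∀ᵐ ξ, g ξ ≠ 0 → ∀ y ∈ Ω, 0 ≤ y ⬝ᵥ ξ) :
    ⨆ y ∈ Ω, sliceNormSq (fourierLaplace g) y = ∫⁻ ξ, ‖g ξ‖ₑ ^ 2 := by
  refine le_antisymm (iSup₂_le fun y hy => ?_) ?_
  · rw [hg.sliceNormSq_fourierLaplace (hΩ.mem_nhds hy)]
    refine lintegral_mono_ae (hsupp.mono fun ξ hξ => ?_)
    by_cases h0 : g ξ = 0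
    · simp [h0]
    · have := hξ h0 y hy
      refine mul_le_of_le_one_right' (ENNReal.ofReal_le_one.2 (Real.exp_le_one_iff.2 ?_))
      rw [neg_nonpos]
      positivity
  · obtain ⟨e, he⟩ := hne
    let y (n : ℕ) : ι → ℝ := (1 / (n + 1 : ℝ)) • e
    have hy (n : ℕ) : y n ∈ Ω := hcone _ (by positivity) e he
    have hlim (ξ : ι → ℝ) :
        Tendsto (fun n => ‖expTilt (y n) g ξ‖ₑ ^ 2) atTop (𝓝 (‖g ξ‖ₑ ^ 2)) := by
      have h := (tendsto_one_div_add_atTop_nhds_zero_nat (𝕜 := ℝ)).mul_const (2 * π * (e ⬝ᵥ ξ))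
      have hexp := ((Real.continuous_exp.tendsto _).comp h.neg).smul_const (g ξ)
      rw [zero_mul, neg_zero, Real.exp_zero, one_smul] at hexp
      refine (((ENNReal.continuous_pow 2).tendsto _).comp hexp.enorm).congr fun n => ?_
      simp only [Function.comp_apply, expTilt, y, smul_dotProduct, smul_eq_mul]
      ring_nf
    calc ∫⁻ ξ, ‖g ξ‖ₑ ^ 2 = ∫⁻ ξ, liminf (fun n => ‖expTilt (y n) g ξ‖ₑ ^ 2) atTop :=
          lintegral_congr fun ξ => (hlim ξ).liminf_eq.symm
      _ ≤ liminf (fun n => ∫⁻ ξ, ‖expTilt (y n) g ξ‖ₑ ^ 2) atTop :=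
          lintegral_liminf_le' fun n =>
            (aestronglyMeasurable_expTilt hg.aestronglyMeasurable _).enorm.pow_const 2
      _ ≤ ⨆ y ∈ Ω, sliceNormSq (fourierLaplace g) y := by
          refine liminf_le_of_frequently_le' (Frequently.of_forall fun n => ?_)
          have hΩn := hΩ.mem_nhds (hy n)
          rw [← _root_.sliceNormSq_fourierLaplace (hg.integrable_expTilt hΩn)
            (hg.memLp_expTilt _ (hy n))]
          exact le_iSup₂ (f := fun y (_ : y ∈ Ω) => sliceNormSq (fourierLaplace g) y) _ (hy n)

end IsDensity

end Hardy

/-! ### The box operator -/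

section Box

theorem eqOn_pd {U : Set (Fin 3 → ℂ)} {F H : (Fin 3 → ℂ) → ℂ} (hU : IsOpen U) (h : EqOn F H U)
    (j : Fin 3) : EqOn (pd j F) (pd j H) U := fun z hz => by
  simp only [pd, (h.eventuallyEq_of_mem (hU.mem_nhds hz)).fderiv_eq]

theorem eqOn_Box {U : Set (Fin 3 → ℂ)} {F H : (Fin 3 → ℂ) → ℂ} (hU : IsOpen U) (h : EqOn F H U) :
    EqOn (Box F) (Box H) U := fun z hz => by
  simp only [Box, eqOn_pd hU (eqOn_pd hU h _) _ hz]

theorem continuous_DeltaL : Continuous DeltaL := by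
  unfold DeltaL
  fun_prop

theorem abs_DeltaL_le (ξ : Fin 3 → ℝ) : |DeltaL ξ| ≤ 2 * ‖ξ‖ ^ 2 := by
  have hsq (i : Fin 3) : ξ i ^ 2 ≤ ‖ξ‖ ^ 2 := sq_le_sq.2 (by simpa using norm_le_pi_norm ξ i)
  rw [DeltaL, abs_le]
  constructor <;> linarith [hsq 0, hsq 1, hsq 2, sq_nonneg (ξ 0), sq_nonneg (ξ 1), sq_nonneg (ξ 2)]

/-- The symbol `4π²Δ` of `□` under the Fourier–Laplace transform, whose kernel is
`e^{2πi⟨z,ξ⟩}`. -/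
def boxSymbol (ξ : Fin 3 → ℝ) : ℝ := 4 * π ^ 2 * DeltaL ξ

theorem continuous_boxSymbol : Continuous boxSymbol := continuous_DeltaL.const_mul _

namespace IsDensity

variable {Ω : Set (Fin 3 → ℝ)} {g : (Fin 3 → ℝ) → ℂ}

theorem coord_mul (hg : IsDensity Ω g) (hΩ : IsOpen Ω) (j : Fin 3) :
    IsDensity Ω fun ξ => 2 * π * Complex.I * ξ j * g ξ := by
  refine hg.mul_of_norm_le hΩ (Continuous.aestronglyMeasurable (by fun_prop)) (C := 2 * π) (n := 1)
    fun ξ => ?_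
  simpa [abs_of_pos Real.pi_pos] using
    mul_le_mul_of_nonneg_left (norm_le_pi_norm ξ j) Real.two_pi_pos.le

theorem pd_fourierLaplace (hg : IsDensity Ω g) (hΩ : IsOpen Ω) (j : Fin 3) :
    EqOn (pd j (fourierLaplace g)) (fourierLaplace fun ξ => 2 * π * Complex.I * ξ j * g ξ)
      (tube Ω) := fun _ hz =>
  hg.fderiv_fourierLaplace_single (hΩ.mem_nhds hz) j

theorem pd_pd_fourierLaplace (hg : IsDensity Ω g) (hΩ : IsOpen Ω) (j : Fin 3) :
    EqOn (pd j (pd j (fourierLaplace g)))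
      (fourierLaplace fun ξ => 2 * π * Complex.I * ξ j * (2 * π * Complex.I * ξ j * g ξ))
      (tube Ω) :=
  (eqOn_pd (isOpen_tube hΩ) (hg.pd_fourierLaplace hΩ j) j).trans
    ((hg.coord_mul hΩ j).pd_fourierLaplace hΩ j)

theorem boxSymbol_mul (hg : IsDensity Ω g) (hΩ : IsOpen Ω) :
    IsDensity Ω fun ξ => boxSymbol ξ * g ξ := by
  refine hg.mul_of_norm_le hΩ
    (Complex.continuous_ofReal.comp continuous_boxSymbol).aestronglyMeasurable
    (C := 4 * π ^ 2 * 2) (n := 2) fun ξ => ?_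
  rw [Complex.norm_real, Real.norm_eq_abs, boxSymbol, abs_mul, abs_of_pos (by positivity),
    mul_assoc _ 2]
  exact mul_le_mul_of_nonneg_left (abs_DeltaL_le ξ) (by positivity)

theorem Box_fourierLaplace (hg : IsDensity Ω g) (hΩ : IsOpen Ω) :
    EqOn (Box (fourierLaplace g)) (fourierLaplace fun ξ => boxSymbol ξ * g ξ) (tube Ω) := by
  intro z hz
  have hint (j : Fin 3) := ((hg.coord_mul hΩ j).coord_mul hΩ j).integrable_cexp_mul
    (hΩ.mem_nhds hz)
  simp only [Box, hg.pd_pd_fourierLaplace hΩ _ hz, neg_add_eq_sub]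
  simp only [fourierLaplace]
  rw [← integral_sub' (hint 1) (hint 0), ← integral_add ((hint 1).sub (hint 0)) (hint 2)]
  refine integral_congr_ae (ae_of_all _ fun ξ => ?_)
  simp only [Pi.sub_apply, boxSymbol, DeltaL]
  push_cast
  linear_combination (-4 * π ^ 2 * (ξ 0 ^ 2 - ξ 1 ^ 2 - ξ 2 ^ 2) * g ξ *
    Complex.exp (2 * π * Complex.I * (z ⬝ᵥ fun i => (ξ i : ℂ)))) * Complex.I_sq

theorem boxSymbol_pow_mul (hg : IsDensity Ω g) (hΩ : IsOpen Ω) (m : ℕ) :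
    IsDensity Ω fun ξ => (boxSymbol ξ : ℂ) ^ m * g ξ := by
  induction m with
  | zero => simpa using hg
  | succ m ih => simpa only [pow_succ', mul_assoc] using ih.boxSymbol_mul hΩ

theorem iterate_Box_fourierLaplace (hg : IsDensity Ω g) (hΩ : IsOpen Ω)
    {F : (Fin 3 → ℂ) → ℂ} (hF : EqOn F (fourierLaplace g) (tube Ω)) (m : ℕ) :
    EqOn (Box^[m] F) (fourierLaplace fun ξ => (boxSymbol ξ : ℂ) ^ m * g ξ) (tube Ω) := by
  induction m with
  | zero => simpa using hF
  | succ m ih =>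
    rw [Function.iterate_succ_apply']
    simpa only [pow_succ', mul_assoc] using (eqOn_Box (isOpen_tube hΩ) ih).trans
      ((hg.boxSymbol_pow_mul hΩ m).Box_fourierLaplace hΩ)

end IsDensity

end Box

/-! ### Geometry of the Lorentz cone -/

section LorentzCone

/-- The space-like part `(y 1, y 2)` of a vector of `ℝ³`, as a complex number, so that the
Lorentz cone is `{y | ‖spacePart y‖ < y 0}`. -/
def spacePart (y : Fin 3 → ℝ) : ℂ := ⟨y 1, y 2⟩

theorem norm_spacePart_sq (y : Fin 3 → ℝ) : ‖spacePart y‖ ^ 2 = y 1 ^ 2 + y 2 ^ 2 := by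
  rw [Complex.sq_norm, spacePart, Complex.normSq_mk]
  ring

theorem spacePart_add (y ξ : Fin 3 → ℝ) : spacePart (y + ξ) = spacePart y + spacePart ξ := rfl

theorem spacePart_smul (t : ℝ) (y : Fin 3 → ℝ) : spacePart (t • y) = t • spacePart y := by
  apply Complex.ext <;> simp [spacePart]

theorem spacePart_single : spacePart (Pi.single 0 1) = 0 := by
  apply Complex.ext <;> simp [spacePart]

theorem abs_dotProduct_sub_mul_le (y ξ : Fin 3 → ℝ) :
    |y ⬝ᵥ ξ - y 0 * ξ 0| ≤ ‖spacePart y‖ * ‖spacePart ξ‖ := by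
  convert Complex.abs_re_le_norm (spacePart y * star (spacePart ξ)) using 2
  · simp [spacePart, dotProduct, Fin.sum_univ_three]
    ring
  · simp

variable {y ξ : Fin 3 → ℝ}

theorem mem_Lambda3_iff_norm_lt : y ∈ Lambda3 ↔ ‖spacePart y‖ < y 0 := by
  have hsq := norm_spacePart_sq y
  have hnorm := norm_nonneg (spacePart y)
  constructor
  · rintro ⟨hadd, hΔ⟩
    have hsub : 0 < y 0 - y 1 := by
      by_contra!
      nlinarith [sq_nonneg (y 2)]
    exact lt_of_pow_lt_pow_left₀ 2 (by linarith) (by linarith)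
  · intro h
    have hy₁ := abs_le.1 (Complex.abs_re_le_norm (spacePart y))
    refine ⟨by linarith [hy₁.1, show (spacePart y).re = y 1 from rfl], ?_⟩
    nlinarith

theorem mem_Lambda3_iff_sub_pos : y ∈ Lambda3 ↔ 0 < y 0 - y 1 ∧ 0 < DeltaL y := by
  refine ⟨fun h => ⟨?_, h.2⟩, fun h => ⟨?_, h.2⟩⟩ <;>
  · by_contra!
    have := h.1
    have hΔ : 0 < y 0 ^ 2 - y 1 ^ 2 - y 2 ^ 2 := h.2
    nlinarith [sq_nonneg (y 2)]

theorem DeltaL_pos (hy : y ∈ Lambda3) : 0 < DeltaL y := hy.2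

theorem norm_eq_of_mem_Lambda3 (hy : y ∈ Lambda3) : ‖y‖ = y 0 := by
  have hlt := mem_Lambda3_iff_norm_lt.1 hy
  refine le_antisymm ((pi_norm_le_iff_of_nonneg ((norm_nonneg _).trans hlt.le)).2 fun i => ?_)
    ((le_abs_self _).trans (norm_le_pi_norm y 0))
  match i with
  | 0 => exact (abs_of_pos ((norm_nonneg _).trans_lt hlt)).le
  | 1 => exact (Complex.abs_re_le_norm (spacePart y)).trans hlt.le
  | 2 => exact (Complex.abs_im_le_norm (spacePart y)).trans hlt.le

theorem isOpen_Lambda3 : IsOpen Lambda3 :=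
  .inter (isOpen_lt (f := fun _ : Fin 3 → ℝ => (0 : ℝ)) (by fun_prop) (by fun_prop))
    (isOpen_lt (by fun_prop) continuous_DeltaL)

theorem measurableSet_Lambda3 : MeasurableSet Lambda3 := isOpen_Lambda3.measurableSet

theorem single_mem_Lambda3 : Pi.single 0 1 ∈ Lambda3 := by
  constructor <;> simp

theorem add_mem_Lambda3 (hy : y ∈ Lambda3) (hξ : ξ ∈ Lambda3) : y + ξ ∈ Lambda3 := by
  rw [mem_Lambda3_iff_norm_lt] at *
  exact (norm_add_le _ _).trans_lt (add_lt_add hy hξ)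

theorem smul_mem_Lambda3 {t : ℝ} (ht : 0 < t) (hy : y ∈ Lambda3) : t • y ∈ Lambda3 := by
  rw [mem_Lambda3_iff_norm_lt] at *
  rw [spacePart_smul, norm_smul, Real.norm_of_nonneg ht.le]
  exact mul_lt_mul_of_pos_left hy ht

theorem convex_Lambda3 : Convex ℝ Lambda3 :=
  convex_iff_forall_pos.2 fun _ hx _ hy _ _ ha hb _ =>
    add_mem_Lambda3 (smul_mem_Lambda3 ha hx) (smul_mem_Lambda3 hb hy)

theorem dotProduct_pos_of_mem_Lambda3 (hy : y ∈ Lambda3) (hξ : ξ ∈ Lambda3) : 0 < y ⬝ᵥ ξ := by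
  rw [mem_Lambda3_iff_norm_lt] at hy hξ
  have := (abs_le.1 (abs_dotProduct_sub_mul_le y ξ)).1
  linarith [mul_lt_mul'' hy hξ (norm_nonneg _) (norm_nonneg _)]

theorem DeltaL_le_DeltaL_add (hy : y ∈ Lambda3) (hξ : ξ ∈ Lambda3) :
    DeltaL y ≤ DeltaL (y + ξ) := by
  have hΔ := DeltaL_pos hξ
  rw [mem_Lambda3_iff_norm_lt] at hy hξ
  have hdot := (abs_le.1 (abs_dotProduct_sub_mul_le y ξ)).2
  have := mul_lt_mul'' hy hξ (norm_nonneg _) (norm_nonneg _)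
  simp only [dotProduct, Fin.sum_univ_three, DeltaL, Pi.add_apply] at *
  nlinarith

theorem mem_closure_Lambda3 (h : ‖spacePart ξ‖ ≤ ξ 0) : ξ ∈ closure Lambda3 := by
  have hlim := (tendsto_one_div_add_atTop_nhds_zero_nat (𝕜 := ℝ)).smul_const
    (Pi.single 0 1 : Fin 3 → ℝ) |>.const_add ξ
  rw [zero_smul, add_zero] at hlim
  refine mem_closure_of_tendsto hlim (Eventually.of_forall fun n => ?_)
  have hn : (0 : ℝ) < 1 / (n + 1) := by positivity
  rw [mem_Lambda3_iff_norm_lt, spacePart_add, spacePart_smul]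
  simpa [spacePart_single] using h.trans_lt (lt_add_of_pos_right _ hn)

theorem mem_closure_Lambda3_of_forall_dotProduct_nonneg (h : ∀ y ∈ Lambda3, 0 ≤ y ⬝ᵥ ξ) :
    ξ ∈ closure Lambda3 := by
  have hcl : ∀ y ∈ closure Lambda3, 0 ≤ y ⬝ᵥ ξ :=
    closure_minimal h (isClosed_le continuous_const (continuous_id.dotProduct continuous_const))
  apply mem_closure_Lambda3
  rcases (norm_nonneg (spacePart ξ)).eq_or_lt with h0 | hpos
  · simpa [← h0] using h _ single_mem_Lambda3
  · have hmem : ![‖spacePart ξ‖, -ξ 1, -ξ 2] ∈ closure Lambda3 :=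
      mem_closure_Lambda3 (norm_neg (spacePart ξ)).le
    have := hcl _ hmem
    have hsq := norm_spacePart_sq ξ
    simp only [dotProduct, Fin.sum_univ_three, Matrix.cons_val] at this
    nlinarith

theorem ae_mem_Lambda3_of_forall_dotProduct_nonneg :
    ∀ᵐ ξ, (∀ y ∈ Lambda3, 0 ≤ y ⬝ᵥ ξ) → ξ ∈ Lambda3 := by
  filter_upwards [measure_eq_zero_iff_ae_notMem.1 (convex_Lambda3.addHaar_frontier volume)]
    with ξ hfr h
  by_contra hξ
  refine hfr ⟨mem_closure_Lambda3_of_forall_dotProduct_nonneg h, ?_⟩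
  rwa [isOpen_Lambda3.interior_eq]

end LorentzCone

/-! ### Laplace transforms of powers of the determinant -/

section LaplaceDeltaPow

theorem setLIntegral_preimage_toLin' {ι : Type*} [Fintype ι] [DecidableEq ι] {M : Matrix ι ι ℝ}
    (hM : M.det ≠ 0) {s : Set (ι → ℝ)} (hs : MeasurableSet s) {f : (ι → ℝ) → ℝ≥0∞}
    (hf : Measurable f) :
    ∫⁻ y in M.toLin' ⁻¹' s, f (M.toLin' y) = ENNReal.ofReal |M.det⁻¹| * ∫⁻ y in s, f y := by
  have hmeas : Measurable M.toLin' := M.toLin'.continuous_of_finiteDimensional.measurable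
  rw [← setLIntegral_map hs hf hmeas, Real.map_matrix_volume_pi_eq_smul_volume_pi hM,
    Measure.restrict_smul, lintegral_smul_measure, smul_eq_mul]

/-- The integrand `e^{-4π⟨y,ξ⟩} Δ(y)^α` of the Laplace transform of `Δ^α`; the factor `4π` is the
one occurring in the slice norms of Fourier–Laplace transforms. -/
def expMulDeltaPow (α : ℝ) (ξ y : Fin 3 → ℝ) : ℝ≥0∞ :=
  ENNReal.ofReal (Real.exp (-(4 * π * (y ⬝ᵥ ξ)))) * ENNReal.ofReal (DeltaL y ^ α)

/-- The Laplace transform of `Δ^α` over the Lorentz cone, as a function of `ξ`. -/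
def laplaceDeltaPow (α : ℝ) (ξ : Fin 3 → ℝ) : ℝ≥0∞ :=
  ∫⁻ y in Lambda3, expMulDeltaPow α ξ y

theorem measurable_uncurry_expMulDeltaPow (α : ℝ) :
    Measurable (Function.uncurry (expMulDeltaPow α)) := by
  have hdot : Continuous fun p : (Fin 3 → ℝ) × (Fin 3 → ℝ) => p.2 ⬝ᵥ p.1 :=
    continuous_snd.dotProduct continuous_fst
  have := hdot.measurable
  have := continuous_DeltaL.measurable
  unfold Function.uncurry expMulDeltaPow
  fun_prop

theorem measurable_laplaceDeltaPow (α : ℝ) : Measurable (laplaceDeltaPow α) :=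
  (measurable_uncurry_expMulDeltaPow α).lintegral_prod_right' (ν := volume.restrict Lambda3)

variable {α : ℝ} {ξ : Fin 3 → ℝ}

theorem measurable_expMulDeltaPow : Measurable (expMulDeltaPow α ξ) :=
  (measurable_uncurry_expMulDeltaPow α).of_uncurry_left

theorem laplaceDeltaPow_pos : 0 < laplaceDeltaPow α ξ := by
  have hsupp : Lambda3 ⊆ Function.support (expMulDeltaPow α ξ) := fun y hy => by
    simp [expMulDeltaPow, Real.exp_pos, Real.rpow_pos_of_pos (DeltaL_pos hy) α]
  rw [laplaceDeltaPow, setLIntegral_pos_iff measurable_expMulDeltaPow, inter_eq_right.2 hsupp]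
  exact isOpen_Lambda3.measure_pos volume ⟨_, single_mem_Lambda3⟩

theorem exp_mul_expMulDeltaPow_le (hα : 0 ≤ α) {w y : Fin 3 → ℝ} (hw : w ∈ Lambda3)
    (hy : y ∈ Lambda3) :
    ENNReal.ofReal (Real.exp (-(4 * π * (w ⬝ᵥ ξ)))) * expMulDeltaPow α ξ y ≤
      expMulDeltaPow α ξ (y + w) := by
  rw [expMulDeltaPow, expMulDeltaPow, ← mul_assoc, ← ENNReal.ofReal_mul (Real.exp_nonneg _),
    ← Real.exp_add, add_dotProduct, mul_add, neg_add_rev]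
  gcongr
  · exact (DeltaL_pos hy).le
  · exact DeltaL_le_DeltaL_add hy hw

/- Translating the cone by `w` shows `e^{-4π⟨w,ξ⟩} K ≤ K` for the integral `K > 0`, where
`e^{-4π⟨w,ξ⟩} > 1`. -/
theorem laplaceDeltaPow_eq_top (hα : 0 ≤ α) {w : Fin 3 → ℝ} (hw : w ∈ Lambda3)
    (hneg : w ⬝ᵥ ξ < 0) : laplaceDeltaPow α ξ = ⊤ := by
  by_contra hfin
  have hone : 1 < Real.exp (-(4 * π * (w ⬝ᵥ ξ))) :=
    Real.one_lt_exp_iff.2 (neg_pos.2 (mul_neg_of_pos_of_neg (by positivity) hneg))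
  have hle : ENNReal.ofReal (Real.exp (-(4 * π * (w ⬝ᵥ ξ)))) * laplaceDeltaPow α ξ ≤
      laplaceDeltaPow α ξ := by
    calc ENNReal.ofReal (Real.exp (-(4 * π * (w ⬝ᵥ ξ)))) * laplaceDeltaPow α ξ
      _ = ∫⁻ y in Lambda3,
            ENNReal.ofReal (Real.exp (-(4 * π * (w ⬝ᵥ ξ)))) * expMulDeltaPow α ξ y :=
          (lintegral_const_mul' _ _ ENNReal.ofReal_ne_top).symm
      _ ≤ ∫⁻ y in Lambda3, expMulDeltaPow α ξ (y + w) :=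
          setLIntegral_mono' measurableSet_Lambda3 fun y hy => exp_mul_expMulDeltaPow_le hα hw hy
      _ ≤ ∫⁻ y in (· + w) ⁻¹' Lambda3, expMulDeltaPow α ξ (y + w) :=
          lintegral_mono_set fun y hy => add_mem_Lambda3 hy hw
      _ = laplaceDeltaPow α ξ :=
          (measurePreserving_add_right volume w).setLIntegral_comp_preimage_emb
            (MeasurableEquiv.addRight w).measurableEmbedding _ _
  refine hle.not_gt ?_
  simpa using ENNReal.mul_lt_mul_left laplaceDeltaPow_pos.ne' hfin (ENNReal.one_lt_ofReal.2 hone)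

theorem laplaceDeltaPow_single_lt_top (hα : 0 ≤ α) :
    laplaceDeltaPow α (Pi.single 0 1) < ⊤ := by
  have hint : Integrable fun y : Fin 3 → ℝ => ‖y‖ ^ (2 * α) * Real.exp (-‖y‖) := by
    rw [integrable_fun_norm_addHaar volume (f := fun r => r ^ (2 * α) * Real.exp (-r))]
    refine (Real.GammaIntegral_convergent (s := 2 * α + 3) (by linarith)).congr_fun
      (fun r hr => ?_) measurableSet_Ioi
    have hr : (0 : ℝ) < r := hr
    simp only [Module.finrank_fintype_fun_eq_card, Fintype.card_fin, smul_eq_mul]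
    rw [show 2 * α + 3 - 1 = 2 * α + (2 : ℕ) by push_cast; ring, Real.rpow_add_natCast hr.ne']
    ring
  refine (setLIntegral_mono' measurableSet_Lambda3 fun y hy => ?_).trans_lt
    ((setLIntegral_le_lintegral _ _).trans_lt hint.lintegral_lt_top)
  have hΔ : DeltaL y ^ α ≤ ‖y‖ ^ (2 * α) := by
    rw [Real.rpow_mul (norm_nonneg y), Real.rpow_two, norm_eq_of_mem_Lambda3 hy]
    refine Real.rpow_le_rpow (DeltaL_pos hy).le ?_ hα
    rw [DeltaL]
    linarith [sq_nonneg (y 1), sq_nonneg (y 2)]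
  rw [expMulDeltaPow, mul_comm, ← ENNReal.ofReal_mul (Real.rpow_nonneg (DeltaL_pos hy).le _)]
  gcongr
  rw [dotProduct_single, mul_one, ← norm_eq_of_mem_Lambda3 hy]
  nlinarith [Real.pi_gt_three, norm_nonneg y]

/-- A linear automorphism of the Lorentz cone attached to a point `ξ` of it. Identifying `y` with
the symmetric matrix `Y = [y₀ + y₁, y₂; y₂, y₀ - y₁]`, so that `Δ = det`, it is `Y ↦ Lᵀ Y L` where
`L Lᵀ` is the Cholesky factorization of the matrix of `ξ`. -/
def coneAut (ξ : Fin 3 → ℝ) : Matrix (Fin 3) (Fin 3) ℝ :=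
  !![ξ 0, ξ 1, ξ 2;
     ξ 1 + ξ 2 ^ 2 / (ξ 0 + ξ 1), ξ 0 - ξ 2 ^ 2 / (ξ 0 + ξ 1), ξ 2;
     √(DeltaL ξ) * ξ 2 / (ξ 0 + ξ 1), -(√(DeltaL ξ) * ξ 2 / (ξ 0 + ξ 1)), √(DeltaL ξ)]

theorem toLin'_coneAut (ξ y : Fin 3 → ℝ) : (coneAut ξ).toLin' y =
    ![ξ 0 * y 0 + ξ 1 * y 1 + ξ 2 * y 2,
      ξ 1 * y 0 + ξ 0 * y 1 + ξ 2 * y 2 + ξ 2 ^ 2 / (ξ 0 + ξ 1) * (y 0 - y 1),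
      √(DeltaL ξ) * (ξ 2 / (ξ 0 + ξ 1) * (y 0 - y 1) + y 2)] := by
  ext i
  fin_cases i <;> simp [coneAut, Matrix.mulVec, dotProduct, Fin.sum_univ_three] <;> ring

theorem det_coneAut (hξ : ξ ∈ Lambda3) : (coneAut ξ).det = DeltaL ξ ^ (3 / 2 : ℝ) := by
  have ha : ξ 0 + ξ 1 ≠ 0 := hξ.1.ne'
  have hdet : (coneAut ξ).det = DeltaL ξ * √(DeltaL ξ) := by
    simp only [Matrix.det_fin_three, coneAut, Matrix.of_apply, Matrix.cons_val]
    generalize √(DeltaL ξ) = d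
    rw [DeltaL]
    field_simp
    ring
  rw [hdet, Real.sqrt_eq_rpow, ← Real.rpow_one_add' (DeltaL_pos hξ).le (by norm_num)]
  norm_num

theorem DeltaL_coneAut (hξ : ξ ∈ Lambda3) (y : Fin 3 → ℝ) :
    DeltaL ((coneAut ξ).toLin' y) = DeltaL ξ * DeltaL y := by
  have ha : ξ 0 + ξ 1 ≠ 0 := hξ.1.ne'
  rw [toLin'_coneAut]
  simp only [DeltaL, Matrix.cons_val, mul_pow, Real.sq_sqrt hξ.2.le]
  field_simp
  ring

theorem coneAut_dotProduct_single (ξ y : Fin 3 → ℝ) :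
    (coneAut ξ).toLin' y ⬝ᵥ Pi.single 0 1 = y ⬝ᵥ ξ := by
  rw [toLin'_coneAut, dotProduct_single, dotProduct, Fin.sum_univ_three]
  simp only [Matrix.cons_val]
  ring

theorem coneAut_mem_Lambda3_iff (hξ : ξ ∈ Lambda3) {y : Fin 3 → ℝ} :
    (coneAut ξ).toLin' y ∈ Lambda3 ↔ y ∈ Lambda3 := by
  have ha : 0 < ξ 0 + ξ 1 := hξ.1
  have hΔ := DeltaL_pos hξ
  have hsub : (coneAut ξ).toLin' y 0 - (coneAut ξ).toLin' y 1 =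
      DeltaL ξ / (ξ 0 + ξ 1) * (y 0 - y 1) := by
    rw [toLin'_coneAut]
    simp only [Matrix.cons_val, DeltaL]
    field_simp
    ring
  rw [mem_Lambda3_iff_sub_pos, mem_Lambda3_iff_sub_pos, DeltaL_coneAut hξ, hsub,
    mul_pos_iff_of_pos_left (by positivity), mul_pos_iff_of_pos_left hΔ]

theorem expMulDeltaPow_single_coneAut (hξ : ξ ∈ Lambda3) {y : Fin 3 → ℝ} (hy : y ∈ Lambda3) :
    expMulDeltaPow α (Pi.single 0 1) ((coneAut ξ).toLin' y) =
      ENNReal.ofReal (DeltaL ξ ^ α) * expMulDeltaPow α ξ y := by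
  have hΔ := DeltaL_pos hξ
  rw [expMulDeltaPow, expMulDeltaPow, coneAut_dotProduct_single, DeltaL_coneAut hξ,
    Real.mul_rpow hΔ.le (DeltaL_pos hy).le, ENNReal.ofReal_mul (by positivity)]
  ring

theorem laplaceDeltaPow_single (hξ : ξ ∈ Lambda3) :
    laplaceDeltaPow α (Pi.single 0 1) =
      ENNReal.ofReal (DeltaL ξ ^ (α + 3 / 2)) * laplaceDeltaPow α ξ := by
  have hΔ := DeltaL_pos hξ
  have hdet : 0 < DeltaL ξ ^ (3 / 2 : ℝ) := Real.rpow_pos_of_pos hΔ _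
  have hpre : (coneAut ξ).toLin' ⁻¹' Lambda3 = Lambda3 :=
    Set.ext fun y => coneAut_mem_Lambda3_iff hξ
  have hchange := setLIntegral_preimage_toLin' (M := coneAut ξ) (by rw [det_coneAut hξ]; positivity)
    measurableSet_Lambda3 (measurable_expMulDeltaPow (α := α) (ξ := Pi.single 0 1))
  rw [hpre, det_coneAut hξ, abs_of_pos (by positivity), setLIntegral_congr_fun
    measurableSet_Lambda3 fun y hy => expMulDeltaPow_single_coneAut hξ hy,
    lintegral_const_mul' _ _ ENNReal.ofReal_ne_top] at hchange
  rw [add_comm, Real.rpow_add hΔ, ENNReal.ofReal_mul hdet.le, mul_assoc, laplaceDeltaPow,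
    laplaceDeltaPow, hchange, ← mul_assoc, ← ENNReal.ofReal_mul hdet.le,
    mul_inv_cancel₀ hdet.ne', ENNReal.ofReal_one, one_mul]

end LaplaceDeltaPow

/-! ### Hardy and Bergman spaces on the Lorentz tube -/

section HardyBergman

theorem setLIntegral_lt_top_of_mul_ofReal {X : Type*} [TopologicalSpace X] [T2Space X]
    [MeasurableSpace X] [BorelSpace X] {μ : Measure X} {K : Set X} (hK : IsCompact K)
    {f : X → ℝ≥0∞} {w : X → ℝ} (hw : ContinuousOn w K) (hpos : ∀ x ∈ K, 0 < w x)
    (h : ∫⁻ x in K, f x * ENNReal.ofReal (w x) ∂μ < ⊤) : ∫⁻ x in K, f x ∂μ < ⊤ := by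
  obtain ⟨d, hd, hdw⟩ := hK.exists_forall_le' hw hpos
  have hle : (∫⁻ x in K, f x ∂μ) * ENNReal.ofReal d ≤ ∫⁻ x in K, f x * ENNReal.ofReal (w x) ∂μ := by
    rw [← lintegral_mul_const' _ _ ENNReal.ofReal_ne_top]
    exact setLIntegral_mono' hK.measurableSet fun x hx => by gcongr; exact hdw x hx
  by_contra! htop
  rw [top_le_iff.1 htop, ENNReal.top_mul (by simpa using hd)] at hle
  exact hle.not_gt h

theorem bergNormSqTube_eq_setLIntegral (ν : ℝ) (G : (Fin 3 → ℂ) → ℂ) :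
    bergNormSqTube ν G =
      ∫⁻ y in Lambda3, sliceNormSq G y * ENNReal.ofReal (DeltaL y ^ (ν - 3 / 2)) := rfl

theorem sliceNormSq_congr {ι : Type*} [Fintype ι] {Ω : Set (ι → ℝ)} {F H : (ι → ℂ) → ℂ}
    (h : EqOn F H (tube Ω)) : EqOn (sliceNormSq F) (sliceNormSq H) Ω := fun _ hy =>
  lintegral_congr fun _ => by rw [h (tubePoint_mem_tube.2 hy)]

theorem hardyNormSq_congr {F H : (Fin 3 → ℂ) → ℂ} (h : EqOn F H TLambda3) :
    hardyNormSq F = hardyNormSq H :=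
  iSup_congr fun _ => iSup_congr fun hy => sliceNormSq_congr h hy

theorem bergNormSqTube_congr {G H : (Fin 3 → ℂ) → ℂ} (ν : ℝ) (h : EqOn G H TLambda3) :
    bergNormSqTube ν G = bergNormSqTube ν H :=
  setLIntegral_congr_fun measurableSet_Lambda3 fun _ hy =>
    congrArg (· * _) (sliceNormSq_congr h hy)

variable {g : (Fin 3 → ℝ) → ℂ}

namespace IsDensity

theorem bergNormSqTube_fourierLaplace (hg : IsDensity Lambda3 g) (ν : ℝ) :
    bergNormSqTube ν (fourierLaplace g) = ∫⁻ ξ, ‖g ξ‖ₑ ^ 2 * laplaceDeltaPow (ν - 3 / 2) ξ := by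
  calc bergNormSqTube ν (fourierLaplace g)
    _ = ∫⁻ y in Lambda3, ∫⁻ ξ, ‖g ξ‖ₑ ^ 2 * expMulDeltaPow (ν - 3 / 2) ξ y := by
        rw [bergNormSqTube_eq_setLIntegral]
        refine setLIntegral_congr_fun measurableSet_Lambda3 fun y hy => ?_
        rw [hg.sliceNormSq_fourierLaplace (isOpen_Lambda3.mem_nhds hy),
          ← lintegral_mul_const' _ _ ENNReal.ofReal_ne_top]
        simp only [expMulDeltaPow, mul_assoc]
    _ = ∫⁻ ξ, ∫⁻ y in Lambda3, ‖g ξ‖ₑ ^ 2 * expMulDeltaPow (ν - 3 / 2) ξ y :=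
        lintegral_lintegral_swap <| (hg.aestronglyMeasurable.enorm.pow_const 2).comp_snd.mul
          ((measurable_uncurry_expMulDeltaPow _).comp measurable_swap).aemeasurable
    _ = ∫⁻ ξ, ‖g ξ‖ₑ ^ 2 * laplaceDeltaPow (ν - 3 / 2) ξ :=
        lintegral_congr fun ξ => lintegral_const_mul' _ _ (by simp)

theorem ae_dotProduct_nonneg_of_bergNormSqTube_lt_top (hg : IsDensity Lambda3 g) {ν : ℝ}
    (hν : 3 / 2 ≤ ν) (h : bergNormSqTube ν (fourierLaplace g) < ⊤) :
    ∀ᵐ ξ, g ξ ≠ 0 → ∀ y ∈ Lambda3, 0 ≤ y ⬝ᵥ ξ := by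
  rw [hg.bergNormSqTube_fourierLaplace] at h
  have hmeas : AEMeasurable fun ξ => ‖g ξ‖ₑ ^ 2 * laplaceDeltaPow (ν - 3 / 2) ξ :=
    (hg.aestronglyMeasurable.enorm.pow_const 2).mul (measurable_laplaceDeltaPow _).aemeasurable
  filter_upwards [ae_lt_top' hmeas h.ne] with ξ hξ h0 y hy
  by_contra! hneg
  rw [laplaceDeltaPow_eq_top (by linarith) hy hneg, ENNReal.mul_top (by simpa using h0)] at hξ
  exact hξ.false

theorem hardyNormSq_fourierLaplace (hg : IsDensity Lambda3 g)
    (hsupp : ∀ᵐ ξ, g ξ ≠ 0 → ξ ∈ Lambda3) :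
    hardyNormSq (fourierLaplace g) = ∫⁻ ξ, ‖g ξ‖ₑ ^ 2 :=
  hg.iSup_sliceNormSq_fourierLaplace isOpen_Lambda3 ⟨_, single_mem_Lambda3⟩
    (fun _ ht _ hy => smul_mem_Lambda3 ht hy)
    (hsupp.mono fun _ hξ h0 _ hy => (dotProduct_pos_of_mem_Lambda3 hy (hξ h0)).le)

end IsDensity

theorem exists_isDensity_of_hardyNormSq_lt_top {F : (Fin 3 → ℂ) → ℂ}
    (hF : DifferentiableOn ℂ F TLambda3) (h : hardyNormSq F < ⊤) :
    ∃ g, IsDensity Lambda3 g ∧ (∀ᵐ ξ, g ξ ≠ 0 → ξ ∈ Lambda3) ∧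
      EqOn F (fourierLaplace g) TLambda3 := by
  obtain ⟨g, hg, hFg⟩ := exists_isDensity_eqOn_fourierLaplace isOpen_Lambda3 convex_Lambda3 hF
    fun K hK hKc => (setLIntegral_mono' hKc.measurableSet fun y hy =>
      le_iSup₂ (f := fun y (_ : y ∈ Lambda3) => sliceNormSq F y) y (hK hy)).trans_lt <| by
        rw [setLIntegral_const]
        exact ENNReal.mul_lt_top h hKc.measure_lt_top
  refine ⟨g, hg, ?_, hFg⟩
  rw [hardyNormSq_congr hFg] at h
  filter_upwards [ae_mem_Lambda3_of_forall_dotProduct_nonneg, hg.ae_dotProduct_nonneg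
    isOpen_Lambda3 (fun _ ht _ hy => smul_mem_Lambda3 ht hy) h] with ξ hξ hdot h0
  exact hξ (hdot h0)

theorem exists_isDensity_of_bergNormSqTube_lt_top {G : (Fin 3 → ℂ) → ℂ} {ν : ℝ} (hν : 3 / 2 ≤ ν)
    (hG : DifferentiableOn ℂ G TLambda3) (h : bergNormSqTube ν G < ⊤) :
    ∃ g, IsDensity Lambda3 g ∧ (∀ᵐ ξ, g ξ ≠ 0 → ξ ∈ Lambda3) ∧
      EqOn G (fourierLaplace g) TLambda3 := by
  obtain ⟨g, hg, hGg⟩ := exists_isDensity_eqOn_fourierLaplace isOpen_Lambda3 convex_Lambda3 hG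
    fun K hK hKc => setLIntegral_lt_top_of_mul_ofReal hKc
      (continuous_DeltaL.continuousOn.rpow_const fun y hy => .inl (DeltaL_pos (hK hy)).ne')
      (fun y hy => Real.rpow_pos_of_pos (DeltaL_pos (hK hy)) _)
      ((lintegral_mono_set hK).trans_lt h)
  refine ⟨g, hg, ?_, hGg⟩
  rw [bergNormSqTube_congr ν hGg] at h
  filter_upwards [ae_mem_Lambda3_of_forall_dotProduct_nonneg,
    hg.ae_dotProduct_nonneg_of_bergNormSqTube_lt_top hν h] with ξ hξ hdot h0
  exact hξ (hdot h0)

/-- The constant `c_m` of the isometry `‖□^m F‖²_{A²_{2m}} = c_m ‖F‖²_{H²}`. -/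
def boxConst (m : ℕ) : ℝ≥0∞ :=
  ENNReal.ofReal ((4 * π ^ 2) ^ (2 * m)) * laplaceDeltaPow (2 * m - 3 / 2) (Pi.single 0 1)

theorem boxConst_ne_zero (m : ℕ) : boxConst m ≠ 0 :=
  mul_ne_zero (ENNReal.ofReal_pos.2 (by positivity)).ne' laplaceDeltaPow_pos.ne'

theorem boxConst_ne_top {m : ℕ} (hm : 1 ≤ m) : boxConst m ≠ ⊤ := by
  have : (1 : ℝ) ≤ m := mod_cast hm
  exact ENNReal.mul_ne_top ENNReal.ofReal_ne_top
    (laplaceDeltaPow_single_lt_top (by linarith)).ne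

theorem boxSymbol_pos {ξ : Fin 3 → ℝ} (hξ : ξ ∈ Lambda3) : 0 < boxSymbol ξ :=
  mul_pos (by positivity) (DeltaL_pos hξ)

/- The homogeneity of `laplaceDeltaPow` exactly cancels the growth of the symbol: this is where the
exponent `ν = 2m` comes from. -/
theorem enorm_boxSymbol_pow_sq_mul_laplaceDeltaPow (m : ℕ) {ξ : Fin 3 → ℝ} (hξ : ξ ∈ Lambda3) :
    ‖(boxSymbol ξ : ℂ) ^ m‖ₑ ^ 2 * laplaceDeltaPow (2 * m - 3 / 2) ξ = boxConst m := by
  have hsym := boxSymbol_pos hξ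
  have hpow : DeltaL ξ ^ ((2 * m : ℝ) - 3 / 2 + 3 / 2) = DeltaL ξ ^ (2 * m) := by
    rw [sub_add_cancel, ← Real.rpow_natCast]
    push_cast
    rfl
  rw [boxConst, laplaceDeltaPow_single hξ, hpow, ← mul_assoc, ← ENNReal.ofReal_mul (by positivity),
    ← mul_pow, ← boxSymbol, ← ofReal_norm, norm_pow, Complex.norm_real,
    Real.norm_of_nonneg hsym.le, ← ENNReal.ofReal_pow (by positivity), ← pow_mul, mul_comm m]

theorem lintegral_enorm_boxSymbol_pow_mul_sq_mul_laplaceDeltaPow (hg : AEStronglyMeasurable g)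
    (hsupp : ∀ᵐ ξ, g ξ ≠ 0 → ξ ∈ Lambda3) (m : ℕ) :
    ∫⁻ ξ, ‖(boxSymbol ξ : ℂ) ^ m * g ξ‖ₑ ^ 2 * laplaceDeltaPow (2 * m - 3 / 2) ξ =
      boxConst m * ∫⁻ ξ, ‖g ξ‖ₑ ^ 2 := by
  rw [← lintegral_const_mul'' _ (hg.enorm.pow_const 2)]
  refine lintegral_congr_ae (hsupp.mono fun ξ hξ => ?_)
  by_cases h0 : g ξ = 0
  · simp [h0]
  · beta_reduce
    rw [enorm_mul, mul_pow, mul_right_comm, enorm_boxSymbol_pow_sq_mul_laplaceDeltaPow m (hξ h0)]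

theorem bergNormSqTube_fourierLaplace_boxSymbol_pow (hg : IsDensity Lambda3 g)
    (hsupp : ∀ᵐ ξ, g ξ ≠ 0 → ξ ∈ Lambda3) (m : ℕ) :
    bergNormSqTube (2 * m) (fourierLaplace fun ξ => (boxSymbol ξ : ℂ) ^ m * g ξ) =
      boxConst m * ∫⁻ ξ, ‖g ξ‖ₑ ^ 2 := by
  rw [(hg.boxSymbol_pow_mul isOpen_Lambda3 m).bergNormSqTube_fourierLaplace,
    lintegral_enorm_boxSymbol_pow_mul_sq_mul_laplaceDeltaPow hg.aestronglyMeasurable hsupp]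

theorem exists_boxSymbol_pow_mul_ae_eq (hg : IsDensity Lambda3 g)
    (hsupp : ∀ᵐ ξ, g ξ ≠ 0 → ξ ∈ Lambda3) {m : ℕ}
    (h : bergNormSqTube (2 * m) (fourierLaplace g) < ⊤) :
    ∃ f, IsDensity Lambda3 f ∧ (∀ᵐ ξ, f ξ ≠ 0 → ξ ∈ Lambda3) ∧ ∫⁻ ξ, ‖f ξ‖ₑ ^ 2 < ⊤ ∧
      (fun ξ => (boxSymbol ξ : ℂ) ^ m * f ξ) =ᵐ[volume] g := by
  let f ξ := ((boxSymbol ξ : ℂ) ^ m)⁻¹ * g ξ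
  have hf : AEStronglyMeasurable f :=
    ((Complex.continuous_ofReal.comp continuous_boxSymbol).measurable.pow_const
      m).inv.aestronglyMeasurable.mul hg.aestronglyMeasurable
  have hfsupp : ∀ᵐ ξ, f ξ ≠ 0 → ξ ∈ Lambda3 :=
    hsupp.mono fun ξ hξ h0 => hξ (right_ne_zero_of_mul h0)
  have hfg : (fun ξ => (boxSymbol ξ : ℂ) ^ m * f ξ) =ᵐ[volume] g := hsupp.mono fun ξ hξ => by
    by_cases h0 : g ξ = 0
    · simp [f, h0]
    · exact mul_inv_cancel_left₀ (pow_ne_zero m (mod_cast (boxSymbol_pos (hξ h0)).ne')) _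
  have hfin : ∫⁻ ξ, ‖f ξ‖ₑ ^ 2 < ⊤ := by
    refine ENNReal.lt_top_of_mul_ne_top_right (ne_of_lt ?_) (boxConst_ne_zero m)
    rw [← lintegral_enorm_boxSymbol_pow_mul_sq_mul_laplaceDeltaPow hf hfsupp]
    rw [hg.bergNormSqTube_fourierLaplace] at h
    exact (lintegral_congr_ae (hfg.mono fun ξ hξ =>
      congrArg (‖·‖ₑ ^ 2 * laplaceDeltaPow _ ξ) hξ)).trans_lt h
  have hdense : IsDensity Lambda3 f :=
    isDensity_of_memLp ((memLp_two_iff_lintegral_lt_top hf).2 hfin) <|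
      hfsupp.mono fun ξ hξ h0 y hy => (dotProduct_pos_of_mem_Lambda3 hy (hξ h0)).le
  exact ⟨f, hdense, hfsupp, hfin, hfg⟩

end HardyBergman

/-- for `m ≥ 1`, `□^m` is a bounded isomorphism of `H²(T_{Λ₃})` onto
`A²_{2m}(T_{Λ₃})`: `‖□^m F‖²_{A²_{2m}} = c_m ‖F‖²_{H²}` for all `F ∈ H²`, and every
`G ∈ A²_{2m}` is a constant multiple of `□^m F` for some `F ∈ H²`. -/
theorem box_isomorphism_hardy_bergman (m : ℕ) (hm : 1 ≤ m) :
    ∃ c : ℝ, 0 < c ∧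
      (∀ F : (Fin 3 → ℂ) → ℂ, DifferentiableOn ℂ F TLambda3 → hardyNormSq F < ⊤ →
        DifferentiableOn ℂ (Box^[m] F) TLambda3 ∧
        bergNormSqTube (2 * m) (Box^[m] F) = ENNReal.ofReal c * hardyNormSq F) ∧
      (∀ G : (Fin 3 → ℂ) → ℂ, DifferentiableOn ℂ G TLambda3 →
        bergNormSqTube (2 * m) G < ⊤ →
        ∃ F : (Fin 3 → ℂ) → ℂ, DifferentiableOn ℂ F TLambda3 ∧ hardyNormSq F < ⊤ ∧
          ∃ a : ℂ, a ≠ 0 ∧ ∀ z ∈ TLambda3, G z = a * Box^[m] F z) := by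
  have hcm : ENNReal.ofReal (boxConst m).toReal = boxConst m :=
    ENNReal.ofReal_toReal (boxConst_ne_top hm)
  refine ⟨(boxConst m).toReal, ENNReal.toReal_pos (boxConst_ne_zero m) (boxConst_ne_top hm),
    fun F hF hFfin => ?_, fun G hG hGfin => ?_⟩
  · obtain ⟨g, hg, hsupp, hFg⟩ := exists_isDensity_of_hardyNormSq_lt_top hF hFfin
    have hBox := hg.iterate_Box_fourierLaplace isOpen_Lambda3 hFg m
    refine ⟨((hg.boxSymbol_pow_mul isOpen_Lambda3 m).differentiableOn_fourierLaplace
      isOpen_Lambda3).congr hBox, ?_⟩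
    rw [bergNormSqTube_congr _ hBox, bergNormSqTube_fourierLaplace_boxSymbol_pow hg hsupp,
      hardyNormSq_congr hFg, hg.hardyNormSq_fourierLaplace hsupp, hcm]
  · have hm' : (1 : ℝ) ≤ m := mod_cast hm
    obtain ⟨g, hg, hsupp, hGg⟩ := exists_isDensity_of_bergNormSqTube_lt_top (by linarith) hG hGfin
    rw [bergNormSqTube_congr _ hGg] at hGfin
    obtain ⟨f, hf, hfsupp, hfin, hfg⟩ := exists_boxSymbol_pow_mul_ae_eq hg hsupp hGfin
    refine ⟨fourierLaplace f, hf.differentiableOn_fourierLaplace isOpen_Lambda3,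
      (hf.hardyNormSq_fourierLaplace hfsupp).trans_lt hfin, 1, one_ne_zero, fun z hz => ?_⟩
    rw [one_mul, hGg hz, hf.iterate_Box_fourierLaplace isOpen_Lambda3 (eqOn_refl _ _) m hz,
      fourierLaplace_congr_ae hfg]
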